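/- arXiv:1707.09854 — 2 statements merged into one kernel-verified Lean document; each statement's English description precedes it below -/
import Mathlib

section
/- Let R be a commutative ring, H ◁ R an ideal of finite index, d ≥ 3, and assume E_d(R) = SL_d(R). Then the relative K-group SK₁(R, H; d) = SL_d(R,H)/E_d(R,H) is a finite group. -/
open Matrix

/-- `E_d(R)`: the subgroup of `SL_d(R)` generated by the elementary matrices
`I_d + rE_{i,j}` (`i ≠ j`, `r ∈ R`). -/
def Esub (R : Type*) [CommRing R] (d : ℕ) : Subgroup (SpecialLinearGroup (Fin d) R) :=
  Subgroup.closure {M | ∃ (i j : Fin d) (c : R), i ≠ j ∧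
    (M : Matrix (Fin d) (Fin d) R) = Matrix.transvection i j c}

/-- `E_d(R,H)`: the normal subgroup of `E_d(R)` generated (as a normal subgroup of
`E_d(R)`) by the elementary matrices `I_d + hE_{i,j}` with `h ∈ H`. -/
def EHsub (R : Type*) [CommRing R] (d : ℕ) (H : Ideal R) :
    Subgroup (SpecialLinearGroup (Fin d) R) :=
  Subgroup.closure {M | ∃ g ∈ Esub R d, ∃ s : SpecialLinearGroup (Fin d) R,
    (∃ (i j : Fin d) (c : R), i ≠ j ∧ c ∈ H ∧
      (s : Matrix (Fin d) (Fin d) R) = Matrix.transvection i j c) ∧ M = g * s * g⁻¹}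

/-- `SL_d(R,H) = ker(SL_d(R) → SL_d(R/H))`. -/
def SLrel (R : Type*) [CommRing R] (d : ℕ) (H : Ideal R) :
    Subgroup (SpecialLinearGroup (Fin d) R) :=
  MonoidHom.ker (SpecialLinearGroup.map (n := Fin d) (Ideal.Quotient.mk H))

/-!
Write `t(v, z) = 1 + v zᵀ` for `zᵀ v = 0`. If `v` is unimodular, the relation `zᵀ v = 0` makes
`z` a combination of Koszul vectors `v_l e_k - v_k e_l`. For `d ≥ 3` each of these vanishes at some
coordinate, which exhibits the corresponding `t(v, -)` as a product of elementary matrices. Since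
`g t(v, z) g⁻¹ = t(g v, z g⁻¹)`, this gives Suslin's theorem: `E_d(R)` is normal in `SL_d(R)`.

Apply it over the double `D = R ×_{R/H} R`. An element `g` of `SL_d(R, H)` lifts to `(g, 1)` over
`D`, and `(x, x)` is elementary over `D` when `x` is elementary, so `(g x g⁻¹, x)` is again
elementary over `D`. The two components of an elementary matrix over `D` agree modulo `E_d(R, H)`,
hence `[SL_d(R, H), E_d(R)] ≤ E_d(R, H)`.

So `E_d(R) / E_d(R, H)` has a center of finite index, and Schur's theorem makes its commutator
subgroup finite; but it is perfect, so it is finite.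
-/

open scoped commutatorElement

section FiniteIndexCenter

variable {G : Type*} [Group G]

lemma commutatorElement_mul_center {x y : G} (hx : x ∈ Subgroup.center G)
    (hy : y ∈ Subgroup.center G) (a b : G) : ⁅a * x, b * y⁆ = ⁅a, b⁆ := by
  have hx' : ⁅x, b * y⁆ = 1 :=
    commutatorElement_eq_one_iff_mul_comm.2 (Subgroup.mem_center_iff.1 hx _).symm
  have hy' : ⁅a, y⁆ = 1 := commutatorElement_eq_one_iff_mul_comm.2 (Subgroup.mem_center_iff.1 hy _)
  rw [commutatorElement_mul_left_eq_conj_mul, hx', commutatorElement_mul_right_eq_mul_conj, hy']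
  group

theorem finite_commutatorSet_of_finiteIndex_center [(Subgroup.center G).FiniteIndex] :
    Finite (commutatorSet G) := by
  refine ((Set.finite_range fun p : (G ⧸ Subgroup.center G) × (G ⧸ Subgroup.center G) =>
    ⁅p.1.out, p.2.out⁆).subset ?_).to_subtype
  rintro _ ⟨a, b, rfl⟩
  obtain ⟨x, hx⟩ := QuotientGroup.mk_out_eq_mul (Subgroup.center G) a
  obtain ⟨y, hy⟩ := QuotientGroup.mk_out_eq_mul (Subgroup.center G) b
  exact ⟨(a, b), by simp only [hx, hy, commutatorElement_mul_center x.2 y.2]⟩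

theorem finite_of_isPerfect_of_finiteIndex_center [Group.IsPerfect G]
    [(Subgroup.center G).FiniteIndex] : Finite G := by
  have := finite_commutatorSet_of_finiteIndex_center (G := G)
  have : Finite (commutator G) := inferInstance
  rw [Group.IsPerfect.commutator_eq_top] at this
  exact Finite.of_equiv _ Subgroup.topEquiv.toEquiv

theorem finiteIndex_of_commutator_top_le [Group.IsPerfect G] {K N : Subgroup G} [K.FiniteIndex]
    (h : ⁅K, (⊤ : Subgroup G)⁆ ≤ N) : N.FiniteIndex := by
  have : ⁅K, (⊤ : Subgroup G)⁆.Normal :=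
    Subgroup.normalizer_eq_top_iff.1 (top_le_iff.1 (Subgroup.normalizer_commutator_ge_right _ _))
  let q := QuotientGroup.mk' ⁅K, (⊤ : Subgroup G)⁆
  have hq : Function.Surjective q := QuotientGroup.mk'_surjective _
  have map_le_center : K.map q ≤ Subgroup.center _ := by
    rw [← Subgroup.commutator_top_right_eq_bot_iff_le_center, ← Subgroup.map_top_of_surjective q hq,
      ← Subgroup.map_commutator, QuotientGroup.map_mk'_self]
  have : (K.map q).FiniteIndex :=
    ⟨ne_zero_of_dvd_ne_zero Subgroup.FiniteIndex.index_ne_zero (Subgroup.index_map_dvd K hq)⟩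
  have := Subgroup.finiteIndex_of_le map_le_center
  have := finite_of_isPerfect_of_finiteIndex_center (G := G ⧸ ⁅K, (⊤ : Subgroup G)⁆)
  have : ⁅K, (⊤ : Subgroup G)⁆.FiniteIndex := Subgroup.finiteIndex_of_finite_quotient
  exact Subgroup.finiteIndex_of_le h

end FiniteIndexCenter

section VecTransvection

variable {n R : Type*} [Fintype n] [DecidableEq n] [CommRing R]

/-- The transvection `1 + v zᵀ`, where `zᵀ v = 0`, as an element of `SL_n(R)`. The elementary
matrices are those with `v` and `z` multiples of distinct basis vectors. -/
def vecTransvection (v z : n → R) (h : z ⬝ᵥ v = 0) : SpecialLinearGroup n R :=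
  ⟨1 + vecMulVec v z, by
    rw [vecMulVec_eq Unit, det_one_add_replicateCol_mul_replicateRow, h, add_zero]⟩

lemma coe_vecTransvection {v z : n → R} (h : z ⬝ᵥ v = 0) :
    (vecTransvection v z h : Matrix n n R) = 1 + vecMulVec v z := rfl

lemma vecTransvection_single_single {i j : n} (hij : i ≠ j) (a b : R) :
    vecTransvection (Pi.single i a) (Pi.single j b) (by simp [hij.symm]) =
      SpecialLinearGroup.transvection hij (a * b) := by
  apply Subtype.ext
  rw [coe_vecTransvection, SpecialLinearGroup.transvection_coe]
  congr 1
  ext k l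
  simp [vecMulVec_apply, single_apply, Pi.single_apply, eq_comm (a := k), eq_comm (a := l),
    ← ite_and, and_comm]

lemma vecTransvection_zero_left (z : n → R) : vecTransvection 0 z (by simp) = 1 :=
  Subtype.ext (by simp [coe_vecTransvection])

lemma vecTransvection_zero_right (v : n → R) : vecTransvection v 0 (by simp) = 1 :=
  Subtype.ext (by simp [coe_vecTransvection])

lemma vecTransvection_add_left {v w z : n → R} (hv : z ⬝ᵥ v = 0) (hw : z ⬝ᵥ w = 0) :
    vecTransvection (v + w) z (by simp [hv, hw]) =
      vecTransvection v z hv * vecTransvection w z hw := by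
  apply Subtype.ext
  simp only [coe_vecTransvection, add_vecMulVec, Matrix.SpecialLinearGroup.coe_mul, mul_add,
    mul_one, add_mul, one_mul, vecMulVec_mul_vecMulVec, hw, zero_smul, vecMulVec_zero, add_zero]
  abel

lemma vecTransvection_add_right {v y z : n → R} (hy : y ⬝ᵥ v = 0) (hz : z ⬝ᵥ v = 0) :
    vecTransvection v (y + z) (by simp [hy, hz]) =
      vecTransvection v y hy * vecTransvection v z hz := by
  apply Subtype.ext
  simp only [coe_vecTransvection, vecMulVec_add, Matrix.SpecialLinearGroup.coe_mul, mul_add,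
    mul_one, add_mul, one_mul, vecMulVec_mul_vecMulVec, hy, zero_smul, vecMulVec_zero, add_zero]
  abel

lemma vecTransvection_sum_left_mem {S : Subgroup (SpecialLinearGroup n R)} {ι : Type*}
    (s : Finset ι) {v : ι → n → R} {z : n → R} (hv : ∀ i, z ⬝ᵥ v i = 0)
    (hS : ∀ i ∈ s, vecTransvection (v i) z (hv i) ∈ S) :
    vecTransvection (∑ i ∈ s, v i) z (by simp [dotProduct_sum, hv]) ∈ S := by
  refine (Finset.sum_induction v (fun w => ∃ h, vecTransvection w z h ∈ S) ?_ ?_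
    fun i hi => ⟨hv i, hS i hi⟩).choose_spec
  · rintro w w' ⟨h, hw⟩ ⟨h', hw'⟩
    exact ⟨_, vecTransvection_add_left h h' ▸ mul_mem hw hw'⟩
  · exact ⟨_, vecTransvection_zero_left z ▸ one_mem S⟩

lemma vecTransvection_sum_right_mem {S : Subgroup (SpecialLinearGroup n R)} {ι : Type*}
    (s : Finset ι) {v : n → R} {z : ι → n → R} (hz : ∀ i, z i ⬝ᵥ v = 0)
    (hS : ∀ i ∈ s, vecTransvection v (z i) (hz i) ∈ S) :
    vecTransvection v (∑ i ∈ s, z i) (by simp [sum_dotProduct, hz]) ∈ S := by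
  refine (Finset.sum_induction z (fun y => ∃ h, vecTransvection v y h ∈ S) ?_ ?_
    fun i hi => ⟨hz i, hS i hi⟩).choose_spec
  · rintro y y' ⟨h, hy⟩ ⟨h', hy'⟩
    exact ⟨_, vecTransvection_add_right h h' ▸ mul_mem hy hy'⟩
  · exact ⟨_, vecTransvection_zero_right v ▸ one_mem S⟩

lemma vecMul_inv_dotProduct_mulVec (g : SpecialLinearGroup n R) (x y : n → R) :
    (x ᵥ* (g⁻¹ : SpecialLinearGroup n R)) ⬝ᵥ ((g : Matrix n n R) *ᵥ y) = x ⬝ᵥ y := by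
  rw [dotProduct_mulVec, vecMul_vecMul, ← Matrix.SpecialLinearGroup.coe_mul, inv_mul_cancel,
    Matrix.SpecialLinearGroup.coe_one, vecMul_one]

lemma conj_vecTransvection (g : SpecialLinearGroup n R) {v z : n → R} (h : z ⬝ᵥ v = 0) :
    g * vecTransvection v z h * g⁻¹ =
      vecTransvection ((g : Matrix n n R) *ᵥ v) (z ᵥ* (g⁻¹ : SpecialLinearGroup n R))
        ((vecMul_inv_dotProduct_mulVec g z v).trans h) := by
  apply Subtype.ext
  simp only [Matrix.SpecialLinearGroup.coe_mul, coe_vecTransvection, mul_add, add_mul, mul_one,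
    mul_vecMulVec, vecMulVec_mul]
  rw [← Matrix.SpecialLinearGroup.coe_mul, mul_inv_cancel, Matrix.SpecialLinearGroup.coe_one]

lemma commutatorElement_vecTransvection {v u w z : n → R} (huv : u ⬝ᵥ v = 0) (hzw : z ⬝ᵥ w = 0)
    (hzv : z ⬝ᵥ v = 0) (huw : u ⬝ᵥ w = 1) :
    ⁅vecTransvection v u huv, vecTransvection w z hzw⁆ = vecTransvection v z hzv := by
  rw [commutatorElement_def, mul_inv_eq_iff_eq_mul, mul_inv_eq_iff_eq_mul]
  apply Subtype.ext
  simp only [Matrix.SpecialLinearGroup.coe_mul, coe_vecTransvection, mul_add, mul_one, add_mul,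
    one_mul, vecMulVec_mul_vecMulVec, huw, one_smul, hzw, zero_smul, vecMulVec_zero, add_zero, hzv]
  abel

lemma commutatorElement_transvection {i j k : n} (hij : i ≠ j) (hjk : j ≠ k) (hik : i ≠ k)
    (c : R) :
    ⁅SpecialLinearGroup.transvection hij (1 : R), SpecialLinearGroup.transvection hjk c⁆ =
      SpecialLinearGroup.transvection hik c := by
  have := commutatorElement_vecTransvection (v := Pi.single i (1 : R)) (u := Pi.single j 1)
    (w := Pi.single j 1) (z := Pi.single k c) (by simp [hij.symm]) (by simp [hjk.symm])
    (by simp [hik.symm]) (by simp)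
  rwa [vecTransvection_single_single hij, vecTransvection_single_single hjk,
    vecTransvection_single_single hik, one_mul, one_mul] at this

lemma map_transvection {S : Type*} [CommRing S] (f : R →+* S) {i j : n} (hij : i ≠ j) (c : R) :
    SpecialLinearGroup.map f (SpecialLinearGroup.transvection hij c) =
      SpecialLinearGroup.transvection hij (f c) :=
  Subtype.ext (by simp [SpecialLinearGroup.transvection_coe, Matrix.map_add])

end VecTransvection

section KoszulVec

variable {n R : Type*} [DecidableEq n] [CommRing R]

/-- The Koszul vector `v_l e_k - v_k e_l`, a relation between the coordinates of `v`. -/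
def koszulVec (v : n → R) (k l : n) : n → R := v l • Pi.single k 1 - v k • Pi.single l 1

lemma koszulVec_apply_of_ne (v : n → R) {k l m : n} (hk : m ≠ k) (hl : m ≠ l) :
    koszulVec v k l m = 0 := by
  simp [koszulVec, hk, hl]

variable [Fintype n]

lemma koszulVec_dotProduct_self (v : n → R) (k l : n) : koszulVec v k l ⬝ᵥ v = 0 := by
  simp [koszulVec, sub_dotProduct, mul_comm]

lemma eq_sum_smul_koszulVec {u v z : n → R} (hu : u ⬝ᵥ v = 1) (hz : z ⬝ᵥ v = 0) :
    z = ∑ p : n × n, (z p.1 * u p.2) • koszulVec v p.1 p.2 := by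
  rw [Fintype.sum_prod_type]
  rw [dotProduct] at hu hz
  have sum_fst : ∑ k, ∑ l, (z k * u l * v l) • (Pi.single k 1 : n → R) = z := by
    simp only [mul_assoc, ← Finset.sum_smul, ← Finset.mul_sum, hu, mul_one]
    exact (pi_eq_sum_univ' z).symm
  have sum_snd : ∑ k, ∑ l, (z k * u l * v k) • (Pi.single l 1 : n → R) = 0 := by
    rw [Finset.sum_comm]
    simp only [mul_right_comm _ (u _), ← Finset.sum_smul, ← Finset.sum_mul, hz, zero_mul, zero_smul,
      Finset.sum_const_zero]
  simp only [koszulVec, smul_sub, smul_smul, Finset.sum_sub_distrib, sum_fst, sum_snd, sub_zero]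

end KoszulVec

section Elementary

variable {R : Type*} [CommRing R] {d : ℕ}

lemma transvection_mem_Esub {i j : Fin d} (hij : i ≠ j) (c : R) :
    SpecialLinearGroup.transvection hij c ∈ Esub R d :=
  Subgroup.subset_closure ⟨i, j, c, hij, rfl⟩

lemma Esub_le_iff {S : Subgroup (SpecialLinearGroup (Fin d) R)} :
    Esub R d ≤ S ↔
      ∀ (i j : Fin d) (hij : i ≠ j) (c : R), SpecialLinearGroup.transvection hij c ∈ S := by
  refine ⟨fun h i j hij c => h (transvection_mem_Esub hij c), fun h => (Subgroup.closure_le S).2 ?_⟩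
  rintro M ⟨i, j, c, hij, hM⟩
  rw [show M = SpecialLinearGroup.transvection hij c from Subtype.ext hM]
  exact h i j hij c

lemma vecTransvection_single_left_mem_Esub (m : Fin d) (a : R) {z : Fin d → R} (hz : z m = 0) :
    vecTransvection (Pi.single m a) z (by simp [hz]) ∈ Esub R d := by
  have := vecTransvection_sum_right_mem (S := Esub R d) Finset.univ (v := Pi.single m a)
    (z := fun k => Pi.single k (z k)) (fun k => by obtain rfl | hk := eq_or_ne k m <;> simp [*])
    fun k _ => ?_
  · simpa only [Finset.univ_sum_single] using this
  · obtain rfl | hk := eq_or_ne k m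
    · simp only [hz, Pi.single_zero, vecTransvection_zero_right, one_mem]
    · rw [vecTransvection_single_single hk.symm]
      exact transvection_mem_Esub _ _

lemma vecTransvection_single_right_mem_Esub (m : Fin d) (b : R) {v : Fin d → R} (hv : v m = 0) :
    vecTransvection v (Pi.single m b) (by simp [hv]) ∈ Esub R d := by
  have := vecTransvection_sum_left_mem (S := Esub R d) Finset.univ (z := Pi.single m b)
    (v := fun k => Pi.single k (v k)) (fun k => by obtain rfl | hk := eq_or_ne k m <;> simp [*])
    fun k _ => ?_
  · simpa only [Finset.univ_sum_single] using this
  · obtain rfl | hk := eq_or_ne k m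
    · simp only [hv, Pi.single_zero, vecTransvection_zero_left, one_mem]
    · rw [vecTransvection_single_single hk]
      exact transvection_mem_Esub _ _

lemma vecTransvection_mem_Esub_of_apply_eq_zero {v z : Fin d → R} (h : z ⬝ᵥ v = 0) {m : Fin d}
    (hz : z m = 0) : vecTransvection v z h ∈ Esub R d := by
  obtain ⟨a, w, hw, rfl⟩ : ∃ (a : R) (w : Fin d → R), w m = 0 ∧ v = Pi.single m a + w :=
    ⟨v m, v - Pi.single m (v m), by simp, by simp⟩
  have hzm : z ⬝ᵥ Pi.single m a = 0 := by simp [hz]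
  have hzw : z ⬝ᵥ w = 0 := by rwa [dotProduct_add, hzm, zero_add] at h
  rw [vecTransvection_add_left hzm hzw, ← commutatorElement_vecTransvection
    (u := Pi.single m 1) (w := Pi.single m 1) (by simp [hw]) (by simp [hz]) hzw (by simp)]
  exact mul_mem (vecTransvection_single_left_mem_Esub m a hz) <|
    Subgroup.commutator_le_self _ <| Subgroup.commutator_mem_commutator
      (vecTransvection_single_right_mem_Esub m 1 hw) (vecTransvection_single_left_mem_Esub m 1 hz)

lemma exists_ne_and_ne_of_three_le (hd : 3 ≤ d) (k l : Fin d) : ∃ m, m ≠ k ∧ m ≠ l :=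
  ENat.exists_ne_ne_of_three_le (by simpa using hd) k l

theorem vecTransvection_mem_Esub (hd : 3 ≤ d) {u v z : Fin d → R} (hu : u ⬝ᵥ v = 1)
    (h : z ⬝ᵥ v = 0) : vecTransvection v z h ∈ Esub R d := by
  have := vecTransvection_sum_right_mem (S := Esub R d) Finset.univ (v := v)
    (z := fun p : Fin d × Fin d => (z p.1 * u p.2) • koszulVec v p.1 p.2)
    (fun p => by rw [smul_dotProduct, koszulVec_dotProduct_self, smul_zero]) fun p _ => ?_
  · simpa only [← eq_sum_smul_koszulVec hu h] using this
  · obtain ⟨m, hk, hl⟩ := exists_ne_and_ne_of_three_le hd p.1 p.2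
    exact vecTransvection_mem_Esub_of_apply_eq_zero _ (m := m)
      (by simp only [Pi.smul_apply, koszulVec_apply_of_ne v hk hl, smul_zero])

theorem Esub_normal (hd : 3 ≤ d) : (Esub R d).Normal where
  conj_mem x hx g := by
    suffices Esub R d ≤ (Esub R d).comap (MulAut.conj g).toMonoidHom from this hx
    refine Esub_le_iff.2 fun i j hij c => ?_
    have hu : ((Pi.single i 1 : Fin d → R) ᵥ* (g⁻¹ : SpecialLinearGroup (Fin d) R)) ⬝ᵥ
        ((g : Matrix (Fin d) (Fin d) R) *ᵥ Pi.single i 1) = 1 := by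
      simp only [vecMul_inv_dotProduct_mulVec, single_dotProduct, Pi.single_eq_same, one_mul]
    rw [← one_mul c, ← vecTransvection_single_single hij, Subgroup.mem_comap,
      MulEquiv.toMonoidHom_eq_coe, MonoidHom.coe_coe, MulAut.conj_apply]
    exact conj_vecTransvection g _ ▸ vecTransvection_mem_Esub hd hu _

theorem isPerfect_Esub (hd : 3 ≤ d) : Group.IsPerfect (Esub R d) := by
  refine Subgroup.isPerfect_iff.2 (le_antisymm (Subgroup.commutator_le_self _) ?_)
  refine Esub_le_iff.2 fun i k hik c => ?_
  obtain ⟨j, hji, hjk⟩ := exists_ne_and_ne_of_three_le hd i k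
  rw [← commutatorElement_transvection hji.symm hjk hik c]
  exact Subgroup.commutator_mem_commutator (transvection_mem_Esub _ _) (transvection_mem_Esub _ _)

lemma map_mem_Esub {S : Type*} [CommRing S] (f : R →+* S) {x : SpecialLinearGroup (Fin d) R}
    (hx : x ∈ Esub R d) : SpecialLinearGroup.map f x ∈ Esub S d := by
  suffices Esub R d ≤ (Esub S d).comap (SpecialLinearGroup.map f) from this hx
  refine Esub_le_iff.2 fun i j hij c => ?_
  rw [Subgroup.mem_comap, map_transvection]
  exact transvection_mem_Esub _ _

lemma conj_mem_EHsub {H : Ideal R} {g x : SpecialLinearGroup (Fin d) R} (hg : g ∈ Esub R d)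
    (hx : x ∈ EHsub R d H) : g * x * g⁻¹ ∈ EHsub R d H := by
  suffices EHsub R d H ≤ (EHsub R d H).comap (MulAut.conj g).toMonoidHom from this hx
  refine (Subgroup.closure_le _).2 ?_
  rintro _ ⟨y, hy, s, hs, rfl⟩
  refine Subgroup.subset_closure ⟨g * y, mul_mem hg hy, s, hs, ?_⟩
  simp only [MulEquiv.toMonoidHom_eq_coe, MonoidHom.coe_coe, MulAut.conj_apply]
  group

lemma transvection_mem_EHsub {H : Ideal R} {i j : Fin d} (hij : i ≠ j) {c : R} (hc : c ∈ H) :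
    SpecialLinearGroup.transvection hij c ∈ EHsub R d H :=
  Subgroup.subset_closure
    ⟨1, one_mem _, SpecialLinearGroup.transvection hij c, ⟨i, j, c, hij, hc, rfl⟩, by simp⟩

end Elementary

section Double

variable {R : Type*} [CommRing R] {d : ℕ} {H : Ideal R}

/-- The double `R ×_{R/H} R` of `R` along `H`: the pairs of elements that agree modulo `H`. -/
def idealDouble (H : Ideal R) : Subring (R × R) :=
  ((Ideal.Quotient.mk H).comp (RingHom.fst R R)).eqLocus
    ((Ideal.Quotient.mk H).comp (RingHom.snd R R))

/-- The first projection `R ×_{R/H} R → R`. -/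
def idealDouble.fst (H : Ideal R) : idealDouble H →+* R :=
  (RingHom.fst R R).comp (idealDouble H).subtype

/-- The second projection `R ×_{R/H} R → R`. -/
def idealDouble.snd (H : Ideal R) : idealDouble H →+* R :=
  (RingHom.snd R R).comp (idealDouble H).subtype

/-- The diagonal `R → R ×_{R/H} R`. -/
def idealDouble.diag (H : Ideal R) : R →+* idealDouble H :=
  ((RingHom.id R).prod (RingHom.id R)).codRestrict (idealDouble H) fun _ => rfl

lemma idealDouble.fst_sub_snd_mem (c : idealDouble H) : fst H c - snd H c ∈ H :=
  Ideal.Quotient.eq.1 c.2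

theorem exists_idealDouble_lift {g : SpecialLinearGroup (Fin d) R} (hg : g ∈ SLrel R d H) :
    ∃ G : SpecialLinearGroup (Fin d) (idealDouble H),
      SpecialLinearGroup.map (idealDouble.fst H) G = g ∧
        SpecialLinearGroup.map (idealDouble.snd H) G = 1 := by
  have hg_one (i j) : Ideal.Quotient.mk H (g i j) =
      Ideal.Quotient.mk H ((1 : Matrix (Fin d) (Fin d) R) i j) := by
    simpa [one_apply, apply_ite] using congr($(MonoidHom.mem_ker.1 hg) i j)
  let M : Matrix (Fin d) (Fin d) (idealDouble H) :=
    fun i j => ⟨(g i j, (1 : Matrix (Fin d) (Fin d) R) i j), hg_one i j⟩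
  have hfst : (idealDouble.fst H).mapMatrix M = g := rfl
  have hsnd : (idealDouble.snd H).mapMatrix M = 1 := rfl
  have hM : M.det = 1 := Subtype.ext <| Prod.ext
    (((idealDouble.fst H).map_det M).trans (by rw [hfst, Matrix.SpecialLinearGroup.det_coe]; rfl))
    (((idealDouble.snd H).map_det M).trans (by rw [hsnd, det_one]; rfl))
  exact ⟨⟨M, hM⟩, rfl, rfl⟩

theorem map_fst_mul_map_snd_inv_mem_EHsub {x : SpecialLinearGroup (Fin d) (idealDouble H)}
    (hx : x ∈ Esub (idealDouble H) d) :
    SpecialLinearGroup.map (idealDouble.fst H) x * (SpecialLinearGroup.map (idealDouble.snd H) x)⁻¹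
      ∈ EHsub R d H := by
  induction hx using Subgroup.closure_induction with
  | mem x hx =>
    obtain ⟨i, j, c, hij, hx⟩ := hx
    rw [show x = SpecialLinearGroup.transvection hij c from Subtype.ext hx, map_transvection,
      map_transvection, SpecialLinearGroup.transvection_inv,
      ← SpecialLinearGroup.transvection_add, ← sub_eq_add_neg]
    exact transvection_mem_EHsub hij (idealDouble.fst_sub_snd_mem c)
  | one => simp only [map_one, inv_one, mul_one, one_mem]
  | mul x y hx _ hx' hy' =>
    rw [map_mul, map_mul]
    convert mul_mem (conj_mem_EHsub (map_mem_Esub (idealDouble.fst H) hx) hy') hx' using 1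
    group
  | inv x hx hx' =>
    rw [map_inv, map_inv]
    convert conj_mem_EHsub (inv_mem (map_mem_Esub (idealDouble.fst H) hx)) (inv_mem hx') using 1
    group

theorem commutator_SLrel_Esub_le_EHsub (hd : 3 ≤ d) : ⁅SLrel R d H, Esub R d⁆ ≤ EHsub R d H := by
  refine Subgroup.commutator_le.2 fun g hg x hx => ?_
  obtain ⟨G, hfst, hsnd⟩ := exists_idealDouble_lift hg
  let X := SpecialLinearGroup.map (idealDouble.diag H) x
  have hX : G * X * G⁻¹ ∈ Esub (idealDouble H) d :=
    (Esub_normal hd).conj_mem X (map_mem_Esub _ hx) G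
  have hfstX : SpecialLinearGroup.map (idealDouble.fst H) X = x := rfl
  have hsndX : SpecialLinearGroup.map (idealDouble.snd H) X = x := rfl
  have := map_fst_mul_map_snd_inv_mem_EHsub hX
  simpa only [commutatorElement_def, map_mul, map_inv, hfst, hsnd, hfstX, hsndX, one_mul,
    inv_one, mul_one] using this

end Double

theorem SK1_finite_general (R : Type*) [CommRing R] (H : Ideal R) [Finite (R ⧸ H)] (d : ℕ)
    (hd : 3 ≤ d) : ((EHsub R d H).subgroupOf (Esub R d)).FiniteIndex := by
  have := isPerfect_Esub (R := R) hd
  have : (SLrel R d H).FiniteIndex := Subgroup.finiteIndex_ker _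
  refine finiteIndex_of_commutator_top_le (K := (SLrel R d H).subgroupOf (Esub R d)) ?_
  exact Subgroup.commutator_le.2 fun g hg x _ =>
    commutator_SLrel_Esub_le_EHsub hd (Subgroup.commutator_mem_commutator hg x.2)

/-- If `H` is an ideal of finite index in a commutative ring `R`, `d ≥ 3`, and
`E_d(R) = SL_d(R)`, then `SK₁(R,H;d) = SL_d(R,H)/E_d(R,H)` is finite, i.e. `E_d(R,H)`
has finite index in `SL_d(R,H)`. -/
theorem SK1_finite (R : Type*) [CommRing R] (H : Ideal R) [Finite (R ⧸ H)]
    (d : ℕ) (hd : 3 ≤ d) (hE : Esub R d = ⊤) :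
    ((EHsub R d H).subgroupOf (SLrel R d H)).FiniteIndex := by
  have : (EHsub R d H).FiniteIndex :=
    ⟨by rw [← Subgroup.relIndex_top_right, ← hE]; exact (SK1_finite_general R H d hd).index_ne_zero⟩
  infer_instance
end

section
/- Let R be a commutative ring, H ◁ R an ideal of finite index, d ≥ 3, with E_d(R) = SL_d(R). Then every element of SK₁(R, H; d) has a representative in SL_d(R,H) of the block form diag(A, I_{d−2}) with A ∈ SL₂(R,H). -/
open Matrix

/-!
Let `S = R / H`. The group `G = E_d(R) / E_d(R, H)` is generated by root elements which satisfy the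
Steinberg relations over `S`, and `SK₁(R, H; d)` is the kernel of `G → SL_d(S)`. A finite ring has
stable range one, so each rank one subgroup of `G` has a Gauss decomposition; hence the set
`U⁺U⁻U⁺T` is stable under left multiplication by the rank one subgroups of the simple roots, and is
all of `G`. An element of the kernel is therefore conjugate to some `vwt` with `v ∈ U⁻`, `w ∈ U⁺`,
`t ∈ T`, and as `U⁺` and `U⁻` embed into `SL_d(S)`, this forces `v = w = 1`. An element of `T` in
the kernel is a product of kernel elements of rank one subgroups; these are central, so that
conjugation by Weyl elements puts all of them into one and the same rank one subgroup, whose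
elements lift to block matrices `diag(A, I)`.
-/

/-- A commutative ring has stable range one if every unimodular pair `(a, b)` can be shortened:
`a + c * b` is a unit for some `c`. -/
def HasStableRangeOne (S : Type*) [CommRing S] : Prop :=
  ∀ a b : S, IsCoprime a b → ∃ c, IsUnit (a + c * b)

lemma hasStableRangeOne_of_isArtinianRing (S : Type*) [CommRing S] [IsArtinianRing S] :
    HasStableRangeOne S := by
  intro a b hab
  obtain ⟨n, y, hy⟩ := IsArtinian.exists_pow_succ_smul_dvd a (1 : S)
  have hzero : a ^ n * (1 - a * y) = 0 := by
    simp only [smul_eq_mul, mul_one] at hy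
    rw [Nat.succ_eq_add_one] at hy
    linear_combination -hy
  refine ⟨1 - a * y, ?_⟩
  by_contra hunit
  obtain ⟨m, hm, hmem⟩ := exists_max_ideal_of_mem_nonunits (mem_nonunits_iff.mpr hunit)
  have := hm.isPrime
  by_cases ha : a ∈ m
  · have hb : b ∈ m := by
      have : a + (1 - a * y) * b - a * (1 - y * b) ∈ m := sub_mem hmem (m.mul_mem_right _ ha)
      convert this using 1
      ring
    obtain ⟨u, v, huv⟩ := hab
    exact hm.ne_top (m.eq_top_iff_one.mpr
      (huv ▸ add_mem (m.mul_mem_left u ha) (m.mul_mem_left v hb)))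
  · have hay : 1 - a * y ∈ m := by
      have : a ^ n * (1 - a * y) ∈ m := hzero ▸ m.zero_mem
      exact (Ideal.IsPrime.mem_or_mem ‹_› this).resolve_left
        fun h => ha (Ideal.IsPrime.mem_of_pow_mem ‹_› n h)
    exact ha ((m.add_mem_iff_left (m.mul_mem_right b hay)).mp hmem)

/-- Elements `x i j r` of a group `G` (meaningful only for `i ≠ j`) which generate `G` and satisfy
the Steinberg relations, together with a representation of `G` by matrices that
sends them to the elementary matrices. Both the Steinberg group and `E_d(R) / E_d(R, H)` (with
`S = R / H`) are examples. -/
structure SteinbergData (ι : Type*) [Fintype ι] [DecidableEq ι] (S : Type*) [CommRing S]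
    (G : Type*) [Group G] where
  x : ι → ι → S → G
  mat : G →* Matrix ι ι S
  x_add : ∀ {i j : ι}, i ≠ j → ∀ r s : S, x i j r * x i j s = x i j (r + s)
  x_commute : ∀ {i j k l : ι}, i ≠ j → k ≠ l → j ≠ k → i ≠ l → ∀ r s : S,
    Commute (x i j r) (x k l s)
  x_mul_x : ∀ {i j k : ι}, i ≠ j → j ≠ k → i ≠ k → ∀ r s : S,
    x i j r * x j k s = x i k (r * s) * x j k s * x i j r
  mat_x : ∀ {i j : ι}, i ≠ j → ∀ r : S, mat (x i j r) = transvection i j r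
  closure_x : Subgroup.closure {g | ∃ i j r, i ≠ j ∧ x i j r = g} = ⊤

namespace SteinbergData

variable {ι : Type*} [Fintype ι] [DecidableEq ι] {S : Type*} [CommRing S]
  {G : Type*} [Group G] (D : SteinbergData ι S G)

section Roots

variable {i j k l : ι}

lemma x_zero (hij : i ≠ j) : D.x i j 0 = 1 := by
  simpa using D.x_add hij 0 0

lemma x_inv (hij : i ≠ j) (r : S) : (D.x i j r)⁻¹ = D.x i j (-r) := by
  rw [inv_eq_iff_mul_eq_one, D.x_add hij, add_neg_cancel, D.x_zero hij]

lemma conj_x_of_ne (hij : i ≠ j) (hkl : k ≠ l) (hjk : j ≠ k) (hil : i ≠ l) (r s : S) :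
    D.x i j r * D.x k l s * (D.x i j r)⁻¹ = D.x k l s :=
  (D.x_commute hij hkl hjk hil r s).mul_inv_cancel

lemma conj_x_left (hij : i ≠ j) (hjl : j ≠ l) (hil : i ≠ l) (r s : S) :
    D.x i j r * D.x j l s * (D.x i j r)⁻¹ = D.x i l (r * s) * D.x j l s := by
  rw [D.x_mul_x hij hjl hil, mul_inv_cancel_right]

lemma inv_conj_x_right (hij : i ≠ j) (hki : k ≠ i) (hkj : k ≠ j) (r s : S) :
    (D.x i j r)⁻¹ * D.x k i s * D.x i j r = D.x k i s * D.x k j (s * r) := by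
  rw [mul_assoc, D.x_mul_x hki hij hkj, (D.x_commute hkj hij hij.symm hkj _ _).eq,
    mul_assoc, inv_mul_cancel_left, (D.x_commute hki hkj hki.symm hkj _ _).eq]

lemma conj_x_right (hij : i ≠ j) (hki : k ≠ i) (hkj : k ≠ j) (r s : S) :
    D.x i j r * D.x k i s * (D.x i j r)⁻¹ = D.x k i s * D.x k j (-(s * r)) := by
  have h := D.inv_conj_x_right hij hki hkj (-r) s
  rwa [← D.x_inv hij, inv_inv, mul_neg] at h

open scoped commutatorElement in
lemma x_eq_commutator (hij : i ≠ j) (hik : i ≠ k) (hjk : j ≠ k) (r s : S) :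
    D.x i j (r * s) = ⁅D.x i k r, D.x k j s⁆ := by
  rw [commutatorElement_def, D.conj_x_left hik hjk.symm hij, mul_inv_cancel_right]

lemma x_mem_of_forall_mem (hij : i ≠ j) (hik : i ≠ k) (hjk : j ≠ k) {K : Subgroup G}
    (h : ∀ r, D.x i k r ∈ K) (h' : ∀ r, D.x k j r ∈ K) (r : S) : D.x i j r ∈ K := by
  rw [← mul_one r, D.x_eq_commutator hij hik hjk, commutatorElement_def]
  exact mul_mem (mul_mem (mul_mem (h r) (h' 1)) (inv_mem (h r))) (inv_mem (h' 1))

end Roots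

section Entries

variable {i j : ι}

lemma mat_x_mul_apply_self (hij : i ≠ j) (r : S) (g : G) (q : ι) :
    D.mat (D.x i j r * g) i q = D.mat g i q + r * D.mat g j q := by
  rw [map_mul, D.mat_x hij, transvection_mul_apply_same]

lemma mat_x_mul_apply_of_ne (hij : i ≠ j) (r : S) (g : G) {p : ι} (hp : p ≠ i) (q : ι) :
    D.mat (D.x i j r * g) p q = D.mat g p q := by
  rw [map_mul, D.mat_x hij, transvection_mul_apply_of_ne _ _ _ _ hp]

lemma mat_mul_x_apply_self (hij : i ≠ j) (g : G) (r : S) (p : ι) :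
    D.mat (g * D.x i j r) p j = D.mat g p j + r * D.mat g p i := by
  rw [map_mul, D.mat_x hij, mul_transvection_apply_same]

lemma mat_mul_x_apply_of_ne (hij : i ≠ j) (g : G) (r : S) (p : ι) {q : ι} (hq : q ≠ j) :
    D.mat (g * D.x i j r) p q = D.mat g p q := by
  rw [map_mul, D.mat_x hij, mul_transvection_apply_of_ne _ _ _ _ hq]

lemma mat_inv (g : G) : D.mat g⁻¹ = (D.mat g)⁻¹ := by
  refine (Matrix.inv_eq_left_inv ?_).symm
  rw [← map_mul, inv_mul_cancel, map_one]

lemma det_mat (g : G) : (D.mat g).det = 1 := by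
  have hker : ⊤ ≤ (detMonoidHom.comp D.mat).ker := by
    rw [← D.closure_x, Subgroup.closure_le]
    rintro _ ⟨i, j, r, hij, rfl⟩
    rw [SetLike.mem_coe, MonoidHom.mem_ker, MonoidHom.comp_apply, D.mat_x hij,
      coe_detMonoidHom, det_transvection_of_ne _ _ hij]
  exact hker (Subgroup.mem_top g)

end Entries

/-- The subgroup generated by the root elements `x i j r` with `i ≠ j` and `P i j`. -/
def rootClosure (P : ι → ι → Prop) : Subgroup G :=
  Subgroup.closure {g | ∃ i j r, i ≠ j ∧ P i j ∧ D.x i j r = g}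

section RootClosure

variable {P Q : ι → ι → Prop} {i j : ι}

lemma x_mem_rootClosure (hij : i ≠ j) (hP : P i j) (r : S) : D.x i j r ∈ D.rootClosure P :=
  Subgroup.subset_closure ⟨i, j, r, hij, hP, rfl⟩

lemma rootClosure_le {K : Subgroup G} :
    D.rootClosure P ≤ K ↔ ∀ i j, i ≠ j → P i j → ∀ r, D.x i j r ∈ K := by
  refine (Subgroup.closure_le K).trans ⟨fun h i j hij hP r => h ⟨i, j, r, hij, hP, rfl⟩, ?_⟩
  rintro h _ ⟨i, j, r, hij, hP, rfl⟩
  exact h i j hij hP r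

lemma rootClosure_mono (h : ∀ i j, i ≠ j → P i j → Q i j) : D.rootClosure P ≤ D.rootClosure Q :=
  D.rootClosure_le.mpr fun i j hij hP => D.x_mem_rootClosure hij (h i j hij hP)

lemma rootClosure_eq_bot (h : ∀ i j, ¬ P i j) : D.rootClosure P = ⊥ :=
  le_bot_iff.mp <| D.rootClosure_le.mpr fun i j _ hP => absurd hP (h i j)

@[elab_as_elim]
lemma rootClosure_induction_left {p : (g : G) → g ∈ D.rootClosure P → Prop}
    (one : p 1 (one_mem _))
    (x_mul : ∀ i j r g hg (hij : i ≠ j) (hP : P i j), p g hg →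
      p (D.x i j r * g) (mul_mem (D.x_mem_rootClosure hij hP r) hg))
    {g : G} (hg : g ∈ D.rootClosure P) : p g hg := by
  induction hg using Subgroup.closure_induction_left with
  | one => exact one
  | mul_left _ ha g hg ih =>
    obtain ⟨i, j, r, hij, hP, rfl⟩ := ha
    exact x_mul i j r g hg hij hP ih
  | inv_mul_cancel _ ha g hg ih =>
    obtain ⟨i, j, r, hij, hP, rfl⟩ := ha
    simpa only [D.x_inv hij] using x_mul i j (-r) g hg hij hP ih

@[elab_as_elim]
lemma rootClosure_induction_right {p : (g : G) → g ∈ D.rootClosure P → Prop}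
    (one : p 1 (one_mem _))
    (mul_x : ∀ i j r g hg (hij : i ≠ j) (hP : P i j), p g hg →
      p (g * D.x i j r) (mul_mem hg (D.x_mem_rootClosure hij hP r)))
    {g : G} (hg : g ∈ D.rootClosure P) : p g hg := by
  induction hg using Subgroup.closure_induction_right with
  | one => exact one
  | mul_right g hg _ ha ih =>
    obtain ⟨i, j, r, hij, hP, rfl⟩ := ha
    exact mul_x i j r g hg hij hP ih
  | mul_inv_cancel g hg _ ha ih =>
    obtain ⟨i, j, r, hij, hP, rfl⟩ := ha
    simpa only [D.x_inv hij] using mul_x i j (-r) g hg hij hP ih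

lemma exists_eq_x (hij : i ≠ j) {g : G} (hg : g ∈ D.rootClosure fun p q => p = i ∧ q = j) :
    ∃ r, g = D.x i j r := by
  induction hg using rootClosure_induction_left with
  | one => exact ⟨0, (D.x_zero hij).symm⟩
  | x_mul p q r g _ _ hpq ih =>
    obtain ⟨rfl, rfl⟩ := hpq
    obtain ⟨s, rfl⟩ := ih
    exact ⟨r + s, D.x_add hij r s⟩

lemma le_normalizer_rootClosure {X : Subgroup G}
    (h : ∀ a ∈ X, ∀ k l, k ≠ l → Q k l → ∀ s, a * D.x k l s * a⁻¹ ∈ D.rootClosure Q) :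
    X ≤ Subgroup.normalizer (D.rootClosure Q) := by
  refine Subgroup.le_normalizer_closure_iff.mpr ?_
  rintro a ha _ ⟨k, l, s, hkl, hQ, rfl⟩
  exact h a ha k l hkl hQ s

lemma rootClosure_le_normalizer
    (h : ∀ i j, i ≠ j → P i j → ∀ k l, k ≠ l → Q k l → (j = k → i ≠ l ∧ Q i l) ∧ (i = l → Q k j)) :
    D.rootClosure P ≤ Subgroup.normalizer (D.rootClosure Q) := by
  refine D.rootClosure_le.mpr fun i j hij hP r => ?_
  have hroot : (D.rootClosure fun p q => p = i ∧ q = j) ≤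
      Subgroup.normalizer (D.rootClosure Q) := by
    refine D.le_normalizer_rootClosure fun a ha k l hkl hQ s => ?_
    obtain ⟨r, rfl⟩ := D.exists_eq_x hij ha
    obtain ⟨hleft, hright⟩ := h i j hij hP k l hkl hQ
    have hs := D.x_mem_rootClosure hkl hQ s
    rcases eq_or_ne j k with rfl | hjk
    · obtain ⟨hil, hQil⟩ := hleft rfl
      rw [D.conj_x_left hij hkl hil]
      exact mul_mem (D.x_mem_rootClosure hil hQil _) hs
    rcases eq_or_ne i l with rfl | hil
    · rw [D.conj_x_right hij hkl hjk.symm]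
      exact mul_mem hs (D.x_mem_rootClosure hjk.symm (hright rfl) _)
    · rwa [D.conj_x_of_ne hij hkl hjk hil]
  exact hroot (D.x_mem_rootClosure hij ⟨rfl, rfl⟩ r)

lemma exists_mul_eq_of_mem_rootClosure {P' : ι → ι → Prop} {g : G}
    (hnorm : D.rootClosure Q ≤ Subgroup.normalizer (D.rootClosure P))
    (hP' : ∀ i j, i ≠ j → P' i j → P i j ∨ Q i j) (hg : g ∈ D.rootClosure P') :
    ∃ u ∈ D.rootClosure P, ∃ v ∈ D.rootClosure Q, u * v = g := by
  have hle : D.rootClosure P' ≤ D.rootClosure P ⊔ D.rootClosure Q :=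
    D.rootClosure_le.mpr fun i j hij hij' r => (hP' i j hij hij').elim
      (fun h => Subgroup.mem_sup_left (D.x_mem_rootClosure hij h r))
      (fun h => Subgroup.mem_sup_right (D.x_mem_rootClosure hij h r))
  have hmem : g ∈ (↑(D.rootClosure P ⊔ D.rootClosure Q) : Set G) := hle hg
  rwa [Subgroup.coe_mul_of_right_le_normalizer_left _ _ hnorm] at hmem

lemma mat_apply_of_forall_ne_row {p : ι} (hp : ∀ i j, i ≠ j → P i j → p ≠ i) {g : G}
    (hg : g ∈ D.rootClosure P) (q : ι) : D.mat g p q = (1 : Matrix ι ι S) p q := by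
  induction hg using rootClosure_induction_left with
  | one => rw [map_one]
  | x_mul i j r g _ hij hP ih => rw [D.mat_x_mul_apply_of_ne hij _ _ (hp i j hij hP), ih]

lemma mat_apply_of_forall_ne_col {q : ι} (hq : ∀ i j, i ≠ j → P i j → q ≠ j) {g : G}
    (hg : g ∈ D.rootClosure P) (p : ι) : D.mat g p q = (1 : Matrix ι ι S) p q := by
  induction hg using rootClosure_induction_right with
  | one => rw [map_one]
  | mul_x i j r g _ hij hP ih => rw [D.mat_mul_x_apply_of_ne hij _ _ _ (hq i j hij hP), ih]

end RootClosure

/-- The rank one subgroup generated by the opposite root elements `x i j r` and `x j i r`. -/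
def rankOne (i j : ι) : Subgroup G :=
  D.rootClosure fun p q => (p = i ∧ q = j) ∨ (p = j ∧ q = i)

section RankOne

variable {i j k : ι} {g : G}

lemma rankOne_comm (i j : ι) : D.rankOne i j = D.rankOne j i :=
  congrArg D.rootClosure (funext₂ fun _ _ => propext or_comm)

lemma x_mem_rankOne (hij : i ≠ j) (r : S) : D.x i j r ∈ D.rankOne i j :=
  D.x_mem_rootClosure hij (Or.inl ⟨rfl, rfl⟩) r

lemma x_mem_rankOne' (hij : i ≠ j) (r : S) : D.x j i r ∈ D.rankOne i j :=
  D.x_mem_rootClosure hij.symm (Or.inr ⟨rfl, rfl⟩) r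

lemma rankOne_mat_row (hg : g ∈ D.rankOne i j) {p : ι} (hpi : p ≠ i) (hpj : p ≠ j) (q : ι) :
    D.mat g p q = (1 : Matrix ι ι S) p q := by
  refine D.mat_apply_of_forall_ne_row ?_ hg q
  rintro a b _ (⟨rfl, rfl⟩ | ⟨rfl, rfl⟩) <;> assumption

lemma rankOne_mat_col (hg : g ∈ D.rankOne i j) (p : ι) {q : ι} (hqi : q ≠ i) (hqj : q ≠ j) :
    D.mat g p q = (1 : Matrix ι ι S) p q := by
  refine D.mat_apply_of_forall_ne_col ?_ hg p
  rintro a b _ (⟨rfl, rfl⟩ | ⟨rfl, rfl⟩) <;> assumption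

lemma rankOne_mat_mul_apply (hij : i ≠ j) (hg : g ∈ D.rankOne i j) (h : G) {p : ι}
    (hp : p = i ∨ p = j) (q : ι) :
    D.mat (g * h) p q = D.mat g p i * D.mat h i q + D.mat g p j * D.mat h j q := by
  rw [map_mul, Matrix.mul_apply]
  refine Fintype.sum_eq_add i j hij fun k hk => ?_
  have hpk : p ≠ k := by rcases hp with rfl | rfl <;> tauto
  rw [D.rankOne_mat_col hg p hk.1 hk.2, Matrix.one_apply_ne hpk, zero_mul]

lemma rankOne_isDiag (hg : g ∈ D.rankOne i j) (hij : D.mat g i j = 0)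
    (hji : D.mat g j i = 0) : (D.mat g).IsDiag := by
  intro p q hpq
  by_cases hp : p ≠ i ∧ p ≠ j
  · rw [D.rankOne_mat_row hg hp.1 hp.2, Matrix.one_apply_ne hpq]
  by_cases hq : q ≠ i ∧ q ≠ j
  · rw [D.rankOne_mat_col hg p hq.1 hq.2, Matrix.one_apply_ne hpq]
  obtain ⟨rfl, rfl⟩ | ⟨rfl, rfl⟩ : (p = i ∧ q = j) ∨ (p = j ∧ q = i) := by grind
  exacts [hij, hji]

lemma rankOne_conj_col (hij : i ≠ j) (hik : i ≠ k) (hjk : j ≠ k) (hg : g ∈ D.rankOne i j)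
    (a b : S) : g * (D.x i k a * D.x j k b) * g⁻¹ =
      D.x i k (D.mat g i i * a + D.mat g i j * b) *
        D.x j k (D.mat g j i * a + D.mat g j j * b) := by
  induction hg using rootClosure_induction_left with
  | one => simp [hij, hij.symm]
  | x_mul p q r g _ hpq hP ih =>
    rw [_root_.mul_inv_rev, ← mul_assoc, mul_assoc (D.x p q r), mul_assoc (D.x p q r), ih,
      ← conj_mul]
    rcases hP with ⟨rfl, rfl⟩ | ⟨rfl, rfl⟩
    · rw [D.conj_x_of_ne hij hik hij.symm hik, D.conj_x_left hij hjk hik, ← mul_assoc,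
        D.x_add hik, D.mat_x_mul_apply_self hij, D.mat_x_mul_apply_self hij,
        D.mat_x_mul_apply_of_ne hij _ _ hij.symm, D.mat_x_mul_apply_of_ne hij _ _ hij.symm]
      congr 2
      ring
    · rw [D.conj_x_of_ne hpq hjk hij hjk, D.conj_x_left hpq hik hjk,
        (D.x_commute hjk hik hik.symm hjk _ _).eq, mul_assoc, D.x_add hjk,
        D.mat_x_mul_apply_self hpq, D.mat_x_mul_apply_self hpq,
        D.mat_x_mul_apply_of_ne hpq _ _ hij, D.mat_x_mul_apply_of_ne hpq _ _ hij]
      congr 2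
      ring

lemma rankOne_inv_conj_row (hij : i ≠ j) (hik : i ≠ k) (hjk : j ≠ k) (hg : g ∈ D.rankOne i j)
    (a b : S) : g⁻¹ * (D.x k i a * D.x k j b) * g =
      D.x k i (a * D.mat g i i + b * D.mat g j i) *
        D.x k j (a * D.mat g i j + b * D.mat g j j) := by
  induction hg using rootClosure_induction_right with
  | one => simp [hij, hij.symm]
  | mul_x p q r g _ hpq hP ih =>
    have hconj (u : G) : (g * D.x p q r)⁻¹ * u * (g * D.x p q r) =
        (D.x p q r)⁻¹ * (g⁻¹ * u * g) * D.x p q r := by group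
    have hsplit (u v : G) : (D.x p q r)⁻¹ * (u * v) * D.x p q r =
        (D.x p q r)⁻¹ * u * D.x p q r * ((D.x p q r)⁻¹ * v * D.x p q r) := by group
    rw [hconj, ih, hsplit]
    rcases hP with ⟨rfl, rfl⟩ | ⟨rfl, rfl⟩
    · rw [D.inv_conj_x_right hij hik.symm hjk.symm,
        (D.x_commute hij hjk.symm hjk hij _ _).inv_mul_cancel, mul_assoc, D.x_add hjk.symm,
        D.mat_mul_x_apply_self hij, D.mat_mul_x_apply_self hij,
        D.mat_mul_x_apply_of_ne hij _ _ _ hij, D.mat_mul_x_apply_of_ne hij _ _ _ hij]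
      congr 2
      ring
    · rw [D.inv_conj_x_right hpq hjk.symm hik.symm,
        (D.x_commute hpq hik.symm hik hpq _ _).inv_mul_cancel,
        (D.x_commute hjk.symm hik.symm hjk hik.symm _ _).eq, ← mul_assoc, D.x_add hik.symm,
        D.mat_mul_x_apply_self hpq, D.mat_mul_x_apply_self hpq,
        D.mat_mul_x_apply_of_ne hpq _ _ _ hpq, D.mat_mul_x_apply_of_ne hpq _ _ _ hpq]
      congr 2
      ring

lemma rankOne_commute (hg : g ∈ D.rankOne i j) {p q : ι} (hpq : p ≠ q) (hpi : p ≠ i)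
    (hpj : p ≠ j) (hqi : q ≠ i) (hqj : q ≠ j) (r : S) : Commute g (D.x p q r) := by
  induction hg using rootClosure_induction_left with
  | one => exact Commute.one_left _
  | x_mul a b s g _ hab hP ih =>
    refine (D.x_commute hab hpq ?_ ?_ s r).mul_left ih <;> grind

end RankOne

/-- The elements of `G` represented by diagonal matrices. -/
def diagonalSubgroup : Subgroup G where
  carrier := {g | (D.mat g).IsDiag}
  one_mem' := by
    rw [Set.mem_ofPred_eq, map_one]
    exact Matrix.isDiag_one
  mul_mem' {a b} ha hb := by
    rw [Set.mem_ofPred_eq, map_mul, ← ha.diagonal_diag, ← hb.diagonal_diag,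
      Matrix.diagonal_mul_diagonal]
    exact Matrix.isDiag_diagonal _
  inv_mem' {g} hg := by
    rw [Set.mem_ofPred_eq, mat_inv, ← hg.diagonal_diag, Matrix.inv_diagonal]
    exact Matrix.isDiag_diagonal _

lemma mat_mul_diagonal_apply (g : G) {t : G} (ht : t ∈ D.diagonalSubgroup) (p q : ι) :
    D.mat (g * t) p q = D.mat g p q * D.mat t q q := by
  have hdiag : (D.mat t).IsDiag := ht
  rw [map_mul, ← hdiag.diagonal_diag, Matrix.mul_diagonal, Matrix.diagonal_apply_eq]

/-- The torus of the rank one subgroup of `i` and `j`. -/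
def rankOneTorus (i j : ι) : Subgroup G := D.rankOne i j ⊓ D.diagonalSubgroup

section RankOneTorus

variable {i j k : ι} {t : G}

lemma rankOneTorus_comm (i j : ι) : D.rankOneTorus i j = D.rankOneTorus j i := by
  rw [rankOneTorus, rankOne_comm, rankOneTorus]

lemma mem_rankOneTorus_of_mat_eq_one (ht : t ∈ D.rankOne i j) (hmat : D.mat t = 1) :
    t ∈ D.rankOneTorus i j :=
  ⟨ht, (congrArg Matrix.IsDiag hmat).mpr Matrix.isDiag_one⟩

lemma rankOneTorus_conj_col (hij : i ≠ j) (hik : i ≠ k) (hjk : j ≠ k)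
    (ht : t ∈ D.rankOneTorus i j) (r : S) :
    t * D.x i k r * t⁻¹ = D.x i k (D.mat t i i * r) := by
  have h := D.rankOne_conj_col hij hik hjk ht.1 r 0
  rw [ht.2 hij.symm] at h
  simpa [D.x_zero hjk] using h

lemma rankOneTorus_conj_row (hij : i ≠ j) (hik : i ≠ k) (hjk : j ≠ k)
    (ht : t ∈ D.rankOneTorus i j) (r : S) :
    t * D.x k i r * t⁻¹ = D.x k i (r * D.mat t⁻¹ i i) := by
  have h := D.rankOne_inv_conj_row hij hik hjk (inv_mem ht.1) r 0
  rw [(inv_mem ht).2 hij] at h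
  simpa [D.x_zero hjk.symm] using h

open scoped commutatorElement in
lemma rankOneTorus_conj_self (hij : i ≠ j) (hik : i ≠ k) (hjk : j ≠ k)
    (ht : t ∈ D.rankOneTorus i j) (r : S) :
    t * D.x i j r * t⁻¹ = D.x i j (D.mat t i i * r * D.mat t⁻¹ j j) := by
  calc t * D.x i j r * t⁻¹ = ⁅t * D.x i k r * t⁻¹, t * D.x k j 1 * t⁻¹⁆ := by
        rw [← conjugate_commutatorElement, ← D.x_eq_commutator hij hik hjk, mul_one]
    _ = ⁅D.x i k (D.mat t i i * r), D.x k j (1 * D.mat t⁻¹ j j)⁆ := by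
        rw [D.rankOneTorus_conj_col hij hik hjk ht,
          D.rankOneTorus_conj_row hij.symm hjk hik (D.rankOneTorus_comm i j ▸ ht)]
    _ = D.x i j (D.mat t i i * r * D.mat t⁻¹ j j) := by
        rw [one_mul, ← D.x_eq_commutator hij hik hjk]

lemma rankOneTorus_mat_of_ne (ht : t ∈ D.rankOneTorus i j) {p : ι} (hpi : p ≠ i) (hpj : p ≠ j) :
    D.mat t p p = 1 := by
  rw [D.rankOne_mat_row ht.1 hpi hpj, Matrix.one_apply_eq]

/-- A third index lets one write `x i j r` as a commutator of root elements on which the action of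
the torus is visible from the matrices alone; this is where `3 ≤ |ι|` enters. -/
lemma rankOneTorus_conj_x (hι : 3 ≤ ENat.card ι) (hij : i ≠ j) (ht : t ∈ D.rankOneTorus i j)
    {p q : ι} (hpq : p ≠ q) (r : S) :
    t * D.x p q r * t⁻¹ = D.x p q (D.mat t p p * r * D.mat t⁻¹ q q) := by
  wlog hp : p ≠ j generalizing i j
  · exact this hij.symm (D.rankOneTorus_comm i j ▸ ht) (by grind)
  obtain ⟨k, hki, hkj⟩ := ENat.exists_ne_ne_of_three_le hι i j
  rcases eq_or_ne p i with rfl | hpi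
  · rcases eq_or_ne q j with rfl | hqj
    · exact D.rankOneTorus_conj_self hij hki.symm hkj.symm ht r
    · rw [D.rankOneTorus_conj_col hij hpq hqj.symm ht,
        D.rankOneTorus_mat_of_ne (inv_mem ht) hpq.symm hqj, mul_one]
  rw [D.rankOneTorus_mat_of_ne ht hpi hp, one_mul]
  rcases eq_or_ne q i with rfl | hqi
  · exact D.rankOneTorus_conj_row hij hpq.symm hp.symm ht r
  rcases eq_or_ne q j with rfl | hqj
  · exact D.rankOneTorus_conj_row hqi hpq.symm hpi.symm (D.rankOneTorus_comm i q ▸ ht) r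
  · rw [D.rankOneTorus_mat_of_ne (inv_mem ht) hqi hqj, mul_one]
    exact (D.rankOne_commute ht.1 hpq hpi hp hqi hqj r).mul_inv_cancel

end RankOneTorus

section Weyl

variable {i j k l o : ι} {g : G}

lemma mem_center_of_mat_eq_one (hι : 3 ≤ ENat.card ι) (hij : i ≠ j) (hg : g ∈ D.rankOne i j)
    (hmat : D.mat g = 1) : g ∈ Subgroup.center G := by
  have hcomm : ⊤ ≤ Subgroup.centralizer {g} := by
    rw [← D.closure_x, Subgroup.closure_le]
    rintro _ ⟨p, q, r, hpq, rfl⟩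
    have h := D.rankOneTorus_conj_x hι hij (D.mem_rankOneTorus_of_mat_eq_one hg hmat) hpq r
    rw [mat_inv, hmat, inv_one, Matrix.one_apply_eq, Matrix.one_apply_eq, one_mul, mul_one,
      mul_inv_eq_iff_eq_mul] at h
    exact Subgroup.mem_centralizer_singleton_iff.mpr h.symm
  exact Subgroup.mem_center_iff.mpr fun h =>
    Subgroup.mem_centralizer_singleton_iff.mp (hcomm (Subgroup.mem_top h))

/-- For `r = ±1`, a representative of the Weyl group element exchanging the indices `i` and `j`. -/
def weyl (i j : ι) (r : S) : G := D.x i j r * D.x j i (-r) * D.x i j r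

lemma weyl_mem_rankOne (hij : i ≠ j) (r : S) : D.weyl i j r ∈ D.rankOne i j :=
  mul_mem (mul_mem (D.x_mem_rankOne hij r) (D.x_mem_rankOne' hij (-r))) (D.x_mem_rankOne hij r)

lemma weyl_inv (hij : i ≠ j) (r : S) : (D.weyl i j r)⁻¹ = D.weyl i j (-r) := by
  rw [weyl, weyl, _root_.mul_inv_rev, _root_.mul_inv_rev, D.x_inv hij, D.x_inv hij.symm, mul_assoc]

lemma mat_weyl_apply_right (hij : i ≠ j) {r : S} (hr : r * r = 1) :
    D.mat (D.weyl i j r) j j = 0 := by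
  rw [weyl, mul_assoc, D.mat_x_mul_apply_of_ne hij _ _ hij.symm, D.mat_x_mul_apply_self hij.symm,
    D.mat_x hij]
  simp [transvection, hij, hr]

lemma weyl_conj_mem_rankOne (hij : i ≠ j) (hik : i ≠ k) (hjk : j ≠ k) {r : S} (hr : r * r = 1)
    (hg : g ∈ D.rankOne j k) : D.weyl i j r * g * (D.weyl i j r)⁻¹ ∈ D.rankOne i k := by
  suffices hle : D.rankOne j k ≤
      (D.rankOne i k).comap (MulAut.conj (D.weyl i j r)).toMonoidHom from hle hg
  refine D.rootClosure_le.mpr ?_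
  rintro p q _ (⟨rfl, rfl⟩ | ⟨rfl, rfl⟩) s
  · have h := D.rankOne_conj_col hij hik hjk (D.weyl_mem_rankOne hij r) 0 s
    rw [D.mat_weyl_apply_right hij hr, D.x_zero hik, one_mul, mul_zero, zero_mul, mul_zero,
      add_zero, D.x_zero hjk, mul_one] at h
    exact (congrArg (· ∈ D.rankOne i q) h).mpr (D.x_mem_rankOne hik _)
  · have h := D.rankOne_inv_conj_row hij hik hjk (inv_mem (D.weyl_mem_rankOne hij r)) 0 s
    rw [inv_inv, D.weyl_inv hij, D.mat_weyl_apply_right hij (by rwa [neg_mul_neg]),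
      ← D.weyl_inv hij, D.x_zero hik.symm, one_mul, zero_mul, zero_mul, mul_zero, add_zero,
      D.x_zero hjk.symm, mul_one] at h
    exact (congrArg (· ∈ D.rankOne i p) h).mpr (D.x_mem_rankOne' hik _)

lemma mem_rankOne_of_mat_eq_one_left (hι : 3 ≤ ENat.card ι) (hij : i ≠ j) (hkj : k ≠ j)
    (hg : g ∈ D.rankOne i j) (hmat : D.mat g = 1) : g ∈ D.rankOne k j := by
  rcases eq_or_ne k i with rfl | hki
  · exact hg
  have hcomm := Subgroup.mem_center_iff.mp (D.mem_center_of_mat_eq_one hι hij hg hmat)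
  have h := D.weyl_conj_mem_rankOne hki hkj hij (mul_one (1 : S)) hg
  rwa [hcomm, mul_inv_cancel_right] at h

lemma mem_rankOne_of_mat_eq_one (hι : 3 ≤ ENat.card ι) (hij : i ≠ j) (hol : o ≠ l)
    (hg : g ∈ D.rankOne i j) (hmat : D.mat g = 1) : g ∈ D.rankOne o l := by
  rcases eq_or_ne o j with rfl | hoj
  · rw [D.rankOne_comm]
    exact D.mem_rankOne_of_mat_eq_one_left hι hij hol.symm hg hmat
  · have h := D.mem_rankOne_of_mat_eq_one_left hι hij hoj hg hmat
    rw [D.rankOne_comm] at h ⊢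
    exact D.mem_rankOne_of_mat_eq_one_left hι hoj.symm hol.symm h hmat

end Weyl

section Unipotent

variable {α : Type*} [LinearOrder α] {f : ι → α} {i j : ι} {g : G}

/-- The unipotent subgroup of "upper triangular" elements for the ordering of `ι` pulled back from
`α` along `f`; replacing `f` by `toDual ∘ f` gives the opposite unipotent subgroup. -/
def unipotent (f : ι → α) : Subgroup G := D.rootClosure fun p q => f p < f q

lemma mat_apply_of_mem_unipotent (hg : g ∈ D.unipotent f) {p q : ι} (hqp : f q ≤ f p) :
    D.mat g p q = (1 : Matrix ι ι S) p q := by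
  induction hg using rootClosure_induction_left generalizing p with
  | one => rw [map_one]
  | x_mul i j r g _ hij hlt ih =>
    rcases eq_or_ne p i with rfl | hpi
    · have hjq : j ≠ q := by
        rintro rfl
        exact hqp.not_gt hlt
      rw [D.mat_x_mul_apply_self hij, ih hqp, ih (hqp.trans hlt.le), Matrix.one_apply_ne hjq,
        mul_zero, add_zero]
    · rw [D.mat_x_mul_apply_of_ne hij _ _ hpi, ih hqp]

lemma eq_one_of_mem_column {a : ι} {s : Finset ι} (ha : a ∉ s)
    (hg : g ∈ D.rootClosure fun p q => p ∈ s ∧ q = a)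
    (hcol : ∀ p, D.mat g p a = (1 : Matrix ι ι S) p a) : g = 1 := by
  induction s using Finset.induction_on generalizing g with
  | empty =>
    rwa [D.rootClosure_eq_bot fun _ _ h => Finset.notMem_empty _ h.1, Subgroup.mem_bot] at hg
  | insert b s hb ih =>
    obtain ⟨hab, has⟩ : a ≠ b ∧ a ∉ s := by simpa [not_or] using ha
    obtain ⟨u, hu, v, hv, rfl⟩ := D.exists_mul_eq_of_mem_rootClosure
      (P := fun p q => p ∈ s ∧ q = a) (Q := fun p q => p = b ∧ q = a)
      (D.rootClosure_le_normalizer (by grind)) (by grind) hg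
    obtain ⟨r, rfl⟩ := D.exists_eq_x hab.symm hv
    have hrow (q : ι) : D.mat u b q = (1 : Matrix ι ι S) b q :=
      D.mat_apply_of_forall_ne_row (by grind) hu q
    have hr : r = 0 := by
      have := hcol b
      rw [D.mat_mul_x_apply_self hab.symm, hrow, hrow, Matrix.one_apply_eq, mul_one] at this
      simpa using this
    rw [hr, D.x_zero hab.symm, mul_one] at hcol ⊢
    exact ih has hu hcol

lemma eq_one_of_mem_unipotent (hg : g ∈ D.unipotent f) (hmat : D.mat g = 1) : g = 1 := by
  suffices h : ∀ s : Finset ι, ∀ g ∈ D.rootClosure fun p q => p ∈ s ∧ q ∈ s ∧ f p < f q,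
      D.mat g = 1 → g = 1 from
    h Finset.univ g (D.rootClosure_mono
      (fun p q _ h => ⟨Finset.mem_univ p, Finset.mem_univ q, h⟩) hg) hmat
  intro s
  induction s using Finset.induction_on_max_value f with
  | empty =>
    intro g hg _
    rwa [D.rootClosure_eq_bot fun _ _ h => Finset.notMem_empty _ h.1, Subgroup.mem_bot] at hg
  | insert a s ha hmax ih =>
    intro g hg hmat
    obtain ⟨u, hu, v, hv, rfl⟩ := D.exists_mul_eq_of_mem_rootClosure
      (P := fun p q => p ∈ s ∧ q = a) (Q := fun p q => p ∈ s ∧ q ∈ s ∧ f p < f q)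
      (D.rootClosure_le_normalizer (by grind)) (by grind) hg
    have hv_col (k : ι) : D.mat v k a = (1 : Matrix ι ι S) k a :=
      D.mat_apply_of_forall_ne_col (by grind) hv k
    have hu_one : u = 1 := by
      refine D.eq_one_of_mem_column ha hu fun p => ?_
      rw [← hmat, map_mul, Matrix.mul_apply, Fintype.sum_eq_single a fun k hk => by
        rw [hv_col, Matrix.one_apply_ne hk, mul_zero], hv_col, Matrix.one_apply_eq, mul_one]
    rw [hu_one, one_mul] at hmat ⊢
    exact ih v hv hmat

/-- The unipotent radical of the minimal parabolic subgroup attached to the simple root `(i, j)`. -/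
def radical (f : ι → α) (i j : ι) : Subgroup G :=
  D.rootClosure fun p q => f p < f q ∧ ¬ (p = i ∧ q = j)

lemma radical_le_unipotent (f : ι → α) (i j : ι) : D.radical f i j ≤ D.unipotent f :=
  D.rootClosure_mono fun _ _ _ h => h.1

lemma rankOne_le_normalizer_radical (hf : Function.Injective f) (hij : f i ⋖ f j) :
    D.rankOne i j ≤ Subgroup.normalizer (D.radical f i j) := by
  refine D.rootClosure_le_normalizer ?_
  rintro p q hpq (⟨rfl, rfl⟩ | ⟨rfl, rfl⟩) k l hkl ⟨hlt, hne⟩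
  · have := hij.lt
    grind
  · constructor
    · rintro rfl
      have hpl : p ≠ l := fun h => hne ⟨rfl, h.symm⟩
      exact ⟨hpl, (hij.ge_of_gt hlt).lt_of_ne (hf.ne hpl), fun h => hpq h.1⟩
    · rintro rfl
      have hkq : k ≠ q := fun h => hne ⟨h, rfl⟩
      exact ⟨(hij.le_of_lt hlt).lt_of_ne (hf.ne hkq), fun h => hpq h.2.symm⟩

lemma exists_radical_mul_x (hf : Function.Injective f) (hij : f i ⋖ f j)
    (hg : g ∈ D.unipotent f) : ∃ u ∈ D.radical f i j, ∃ r, u * D.x i j r = g := by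
  have hle : (D.rootClosure fun p q => p = i ∧ q = j) ≤ D.rankOne i j :=
    D.rootClosure_mono fun _ _ _ => Or.inl
  obtain ⟨u, hu, v, hv, rfl⟩ := D.exists_mul_eq_of_mem_rootClosure
    (hle.trans (D.rankOne_le_normalizer_radical hf hij)) (fun p q _ h => by tauto) hg
  obtain ⟨r, rfl⟩ := D.exists_eq_x (fun h => hij.ne (congrArg f h)) hv
  exact ⟨u, hu, r, rfl⟩

end Unipotent

section Gauss

variable {i j : ι} {g : G}

lemma exists_isUnit_mat_x_mul (hS : HasStableRangeOne S) (hij : i ≠ j) (hg : g ∈ D.rankOne i j) :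
    ∃ a, IsUnit (D.mat (D.x i j a * g) i i) := by
  have h := D.rankOne_mat_mul_apply hij (inv_mem hg) g (Or.inl rfl) i
  rw [inv_mul_cancel, map_one, Matrix.one_apply_eq] at h
  obtain ⟨a, ha⟩ := hS (D.mat g i i) (D.mat g j i) ⟨_, _, h.symm⟩
  exact ⟨a, by rwa [D.mat_x_mul_apply_self hij]⟩

lemma exists_mul_mem_rankOneTorus (hij : i ≠ j) (hg : g ∈ D.rankOne i j)
    (hunit : IsUnit (D.mat g i i)) : ∃ b c, D.x i j c * (D.x j i b * g) ∈ D.rankOneTorus i j := by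
  obtain ⟨v, hv⟩ := hunit.exists_left_inv
  set b := -(D.mat g j i * v) with hb
  set h := D.x j i b * g with hh
  have hmem : h ∈ D.rankOne i j := mul_mem (D.x_mem_rankOne' hij b) hg
  have hji : D.mat h j i = 0 := by
    rw [hh, D.mat_x_mul_apply_self hij.symm, hb]
    linear_combination -D.mat g j i * hv
  have hjj : D.mat h j j * D.mat h⁻¹ j j = 1 := by
    have := D.rankOne_mat_mul_apply hij hmem h⁻¹ (Or.inr rfl) j
    rwa [mul_inv_cancel, map_one, Matrix.one_apply_eq, hji, zero_mul, zero_add, eq_comm] at this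
  set c := -(D.mat h i j * D.mat h⁻¹ j j) with hc
  have hmem' : D.x i j c * h ∈ D.rankOne i j := mul_mem (D.x_mem_rankOne hij c) hmem
  refine ⟨b, c, hmem', D.rankOne_isDiag hmem' ?_ ?_⟩
  · rw [D.mat_x_mul_apply_self hij, hc]
    linear_combination -D.mat h i j * hjj
  · rw [D.mat_x_mul_apply_of_ne hij _ _ hij.symm, hji]

lemma exists_gauss_decomposition (hS : HasStableRangeOne S) (hij : i ≠ j)
    (hg : g ∈ D.rankOne i j) :
    ∃ a b c, ∃ t ∈ D.rankOneTorus i j, D.x i j a * D.x j i b * D.x i j c * t = g := by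
  obtain ⟨a, ha⟩ := D.exists_isUnit_mat_x_mul hS hij hg
  obtain ⟨b, c, ht⟩ :=
    D.exists_mul_mem_rankOneTorus hij (mul_mem (D.x_mem_rankOne hij a) hg) ha
  refine ⟨-a, -b, -c, _, ht, ?_⟩
  rw [← D.x_inv hij, ← D.x_inv hij, ← D.x_inv hij.symm]
  group

end Gauss

section Torus

variable {α : Type*} [LinearOrder α] {f : ι → α} {s : Finset ι} {i j k o l : ι} {t : G}

/-- The subgroup generated by the rank one tori of the simple roots `(i, j)` with `j ∈ s`. -/
def torus (f : ι → α) (s : Finset ι) : Subgroup G :=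
  Subgroup.closure {g | ∃ i, ∃ j ∈ s, f i ⋖ f j ∧ g ∈ D.rankOneTorus i j}

lemma rankOneTorus_le_torus (hij : f i ⋖ f j) (hj : j ∈ s) : D.rankOneTorus i j ≤ D.torus f s :=
  fun _ hg => Subgroup.subset_closure ⟨i, j, hj, hij, hg⟩

lemma torus_le {K : Subgroup G} :
    D.torus f s ≤ K ↔ ∀ i, ∀ j ∈ s, f i ⋖ f j → D.rankOneTorus i j ≤ K := by
  refine (Subgroup.closure_le K).trans
    ⟨fun h i j hj hij g hg => h ⟨i, j, hj, hij, hg⟩, ?_⟩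
  rintro h _ ⟨i, j, hj, hij, hg⟩
  exact h i j hj hij hg

lemma torus_le_diagonalSubgroup : D.torus f s ≤ D.diagonalSubgroup :=
  D.torus_le.mpr fun _ _ _ _ => inf_le_right

lemma torus_le_normalizer_rootClosure (hι : 3 ≤ ENat.card ι) (P : ι → ι → Prop) :
    D.torus f s ≤ Subgroup.normalizer (D.rootClosure P) := by
  refine D.torus_le.mpr fun i j _ hij => D.le_normalizer_rootClosure fun t ht p q hpq hP r => ?_
  rw [D.rankOneTorus_conj_x hι (fun h => hij.ne (congrArg f h)) ht hpq]
  exact D.x_mem_rootClosure hpq hP _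

lemma torus_le_normalizer_rankOneTorus (hι : 3 ≤ ENat.card ι) (i j : ι) :
    D.torus f s ≤ Subgroup.normalizer (D.rankOneTorus i j) := by
  have hroot : D.torus f s ≤ Subgroup.normalizer (D.rankOne i j) :=
    D.torus_le_normalizer_rootClosure hι _
  have hdiag : D.torus f s ≤ Subgroup.normalizer D.diagonalSubgroup :=
    D.torus_le_diagonalSubgroup.trans Subgroup.le_normalizer
  exact (le_inf hroot hdiag).trans Subgroup.inf_normalizer_le_normalizer_inf

lemma torus_mat_apply_self (hk : ∀ j ∈ s, f j < f k) (ht : t ∈ D.torus f s) :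
    D.mat t k k = 1 := by
  induction ht using Subgroup.closure_induction with
  | mem t ht =>
    obtain ⟨i, j, hj, hij, ht⟩ := ht
    exact D.rankOneTorus_mat_of_ne ht (ne_of_apply_ne f (hij.lt.trans (hk j hj)).ne')
      (ne_of_apply_ne f (hk j hj).ne')
  | one => rw [map_one, Matrix.one_apply_eq]
  | mul a b _ hb iha ihb =>
    rw [D.mat_mul_diagonal_apply a (D.torus_le_diagonalSubgroup hb), iha, ihb, one_mul]
  | inv a ha iha =>
    have h := D.mat_mul_diagonal_apply a (inv_mem (D.torus_le_diagonalSubgroup ha)) k k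
    rwa [mul_inv_cancel, map_one, Matrix.one_apply_eq, iha, one_mul, eq_comm] at h

lemma rankOneTorus_mat_eq_one (hij : i ≠ j) (ht : t ∈ D.rankOneTorus i j)
    (hj : D.mat t j j = 1) : D.mat t = 1 := by
  have hdiag : (D.mat t).IsDiag := ht.2
  have hi : D.mat t i i = 1 := by
    have hdet := D.det_mat t
    rw [← hdiag.diagonal_diag, det_diagonal] at hdet
    simp only [diag_apply] at hdet
    rwa [Fintype.prod_eq_mul i j hij fun k hk => D.rankOneTorus_mat_of_ne ht hk.1 hk.2, hj,
      mul_one] at hdet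
  rw [← hdiag.diagonal_diag, ← diagonal_one]
  congr 1
  funext k
  by_cases hk : k = i ∨ k = j
  · rcases hk with rfl | rfl <;> assumption
  · rw [not_or] at hk
    exact D.rankOneTorus_mat_of_ne ht hk.1 hk.2

lemma torus_insert_le (hf : Function.Injective f) (hij : f i ⋖ f j) :
    D.torus f (insert j s) ≤ D.rankOneTorus i j ⊔ D.torus f s := by
  refine D.torus_le.mpr fun p q hq hpq => ?_
  rcases Finset.mem_insert.mp hq with rfl | hq
  · rw [hf (hpq.unique_left hij)]
    exact le_sup_left
  · exact (D.rankOneTorus_le_torus hpq hq).trans le_sup_right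

lemma mem_rankOne_of_mem_torus (hι : 3 ≤ ENat.card ι) (hf : Function.Injective f) (hol : o ≠ l)
    (ht : t ∈ D.torus f s) (hmat : D.mat t = 1) : t ∈ D.rankOne o l := by
  induction s using Finset.induction_on_max_value f generalizing t with
  | empty =>
    have hbot : D.torus f ∅ ≤ ⊥ := D.torus_le.mpr fun _ _ h => absurd h (Finset.notMem_empty _)
    exact Subgroup.mem_bot.mp (hbot ht) ▸ one_mem _
  | insert a s ha hmax ih =>
    by_cases hpred : ∃ i, f i ⋖ f a
    · obtain ⟨i, hia⟩ := hpred
      have hmem : t ∈ (↑(D.rankOneTorus i a ⊔ D.torus f s) : Set G) := D.torus_insert_le hf hia ht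
      rw [Subgroup.coe_mul_of_right_le_normalizer_left _ _
        (D.torus_le_normalizer_rankOneTorus hι i a)] at hmem
      obtain ⟨u, hu, v, hv, rfl⟩ := hmem
      have hva : D.mat v a a = 1 := D.torus_mat_apply_self
        (fun j hj => (hmax j hj).lt_of_ne (hf.ne (ne_of_mem_of_not_mem hj ha))) hv
      have hua : D.mat u a a = 1 := by
        have h := D.mat_mul_diagonal_apply u (D.torus_le_diagonalSubgroup hv) a a
        rwa [hmat, Matrix.one_apply_eq, hva, mul_one, eq_comm] at h
      have hne : i ≠ a := ne_of_apply_ne f hia.ne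
      have hu_one : D.mat u = 1 := D.rankOneTorus_mat_eq_one hne hu hua
      rw [map_mul, hu_one, one_mul] at hmat
      exact mul_mem (D.mem_rankOne_of_mat_eq_one hι hne hol hu.1 hu_one) (ih hv hmat)
    · have hle : D.torus f (insert a s) ≤ D.torus f s := D.torus_le.mpr fun p q hq hpq => by
        rcases Finset.mem_insert.mp hq with rfl | hq
        · exact absurd ⟨p, hpq⟩ hpred
        · exact D.rankOneTorus_le_torus hpq hq
      exact ih (hle ht) hmat

end Torus

section BigCell

variable {α : Type*} [LinearOrder α] {f : ι → α} {i j o l : ι} {g : G}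

open OrderDual (toDual)

/-- The set `U⁺ U⁻ U⁺ T`, where `U⁺` and `U⁻` are the opposite unipotent subgroups for the ordering
pulled back along `f`, and `T` is the torus of all simple roots. -/
def bigCell (f : ι → α) : Set G :=
  {g | ∃ u ∈ D.unipotent f, ∃ v ∈ D.unipotent (toDual ∘ f), ∃ w ∈ D.unipotent f,
    ∃ t ∈ D.torus f Finset.univ, u * v * w * t = g}

lemma one_mem_bigCell : 1 ∈ D.bigCell f :=
  ⟨1, one_mem _, 1, one_mem _, 1, one_mem _, 1, one_mem _, by simp only [mul_one]⟩

/-- Each unipotent factor splits off its simple root part, the product of these parts with `m` is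
redistributed by the Gauss decomposition in the rank one group, and the rank one elements are moved
past the unipotent radicals, which they normalize. -/
lemma mul_mem_bigCell (hS : HasStableRangeOne S) (hf : Function.Injective f) (hij : f i ⋖ f j)
    {m : G} (hm : m ∈ D.rankOne i j) (hg : g ∈ D.bigCell f) : m * g ∈ D.bigCell f := by
  have hne : i ≠ j := ne_of_apply_ne f hij.ne
  have hf' : Function.Injective (toDual ∘ f) := OrderDual.toDual.injective.comp hf
  have hji : (toDual ∘ f) j ⋖ (toDual ∘ f) i := toDual_covBy_toDual_iff.mpr hij
  obtain ⟨u, hu, v, hv, w, hw, t, ht, rfl⟩ := hg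
  obtain ⟨u', hu', a, rfl⟩ := D.exists_radical_mul_x hf hij hu
  obtain ⟨v', hv', b, rfl⟩ := D.exists_radical_mul_x hf' hji hv
  obtain ⟨w', hw', c, rfl⟩ := D.exists_radical_mul_x hf hij hw
  have hx (r : S) := D.x_mem_rankOne hne r
  have hx' (r : S) := D.x_mem_rankOne' hne r
  have hma := mul_mem hm (hx a)
  have hmab := mul_mem hma (hx' b)
  obtain ⟨a', b', c', τ, hτ, hgauss⟩ := D.exists_gauss_decomposition hS hne (mul_mem hmab (hx c))
  have conj {y n : G} (hy : y ∈ D.rankOne i j) (hn : n ∈ D.radical f i j) :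
      y * n * y⁻¹ ∈ D.radical f i j :=
    (Subgroup.mem_normalizer_iff.mp (D.rankOne_le_normalizer_radical hf hij hy) n).mp hn
  have conj' {y n : G} (hy : y ∈ D.rankOne i j) (hn : n ∈ D.radical (toDual ∘ f) j i) :
      y * n * y⁻¹ ∈ D.radical (toDual ∘ f) j i :=
    (Subgroup.mem_normalizer_iff.mp
      (D.rankOne_le_normalizer_radical hf' hji (D.rankOne_comm i j ▸ hy)) n).mp hn
  refine ⟨m * u' * m⁻¹ * D.x i j a',
    mul_mem (D.radical_le_unipotent _ _ _ (conj hm hu')) (D.x_mem_rootClosure hne hij.lt a'),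
    _ * D.x j i b',
    mul_mem (D.radical_le_unipotent _ _ _ (conj' (mul_mem (inv_mem (hx a')) hma) hv'))
      (D.x_mem_rootClosure hne.symm hji.lt b'),
    _ * D.x i j c',
    mul_mem (D.radical_le_unipotent _ _ _
      (conj (mul_mem (inv_mem (mul_mem (hx a') (hx' b'))) hmab) hw'))
      (D.x_mem_rootClosure hne hij.lt c'),
    τ * t, mul_mem (D.rankOneTorus_le_torus hij (Finset.mem_univ j) hτ) ht, ?_⟩
  rw [← eq_inv_mul_iff_mul_eq] at hgauss
  rw [hgauss]
  group

lemma eq_one_of_mat_mul_mul_eq_one {v w t : G}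
    (hv : v ∈ D.unipotent (toDual ∘ f)) (hw : w ∈ D.unipotent f) (ht : t ∈ D.diagonalSubgroup)
    (hmat : D.mat (v * w * t) = 1) : v = 1 ∧ w = 1 := by
  have hw_eq : D.mat w = D.mat (v⁻¹ * t⁻¹) := by
    rw [show w = v⁻¹ * (v * w * t) * t⁻¹ by group, map_mul, map_mul, hmat, mul_one, map_mul]
  have hw_one : w = 1 := by
    refine D.eq_one_of_mem_unipotent hw (Matrix.ext fun p q => ?_)
    rcases le_or_gt (f q) (f p) with hqp | hpq
    · exact D.mat_apply_of_mem_unipotent hw hqp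
    · rw [hw_eq, D.mat_mul_diagonal_apply _ (inv_mem ht),
        D.mat_apply_of_mem_unipotent (inv_mem hv) (OrderDual.toDual_le_toDual.mpr hpq.le),
        Matrix.one_apply_ne (ne_of_apply_ne f hpq.ne), zero_mul]
  refine ⟨D.eq_one_of_mem_unipotent hv (Matrix.ext fun p q => ?_), hw_one⟩
  have hv_eq : D.mat v = D.mat t⁻¹ := by
    rw [hw_one, mul_one] at hmat
    rw [show v = v * t * t⁻¹ by group, map_mul, hmat, one_mul]
  rcases eq_or_ne p q with rfl | hpq
  · exact D.mat_apply_of_mem_unipotent hv le_rfl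
  · rw [hv_eq, (inv_mem ht : t⁻¹ ∈ D.diagonalSubgroup) hpq, Matrix.one_apply_ne hpq]

lemma mem_rankOne_of_mem_bigCell (hι : 3 ≤ ENat.card ι) (hf : Function.Injective f) (hol : o ≠ l)
    (hg : g ∈ D.bigCell f) (hmat : D.mat g = 1) : g ∈ D.rankOne o l := by
  obtain ⟨u, hu, v, hv, w, hw, t, ht, rfl⟩ := hg
  have hw' : w * (t * u * t⁻¹) ∈ D.unipotent f := mul_mem hw
    ((Subgroup.mem_normalizer_iff.mp (D.torus_le_normalizer_rootClosure hι _ ht) u).mp hu)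
  have hmat' : D.mat (v * (w * (t * u * t⁻¹)) * t) = 1 := by
    rw [show v * (w * (t * u * t⁻¹)) * t = u⁻¹ * (u * v * w * t) * u by group, map_mul, map_mul,
      hmat, mul_one, ← map_mul, inv_mul_cancel, map_one]
  have hconj : u * v * w * t = u * (v * (w * (t * u * t⁻¹)) * t) * u⁻¹ := by group
  obtain ⟨hv_one, hw_one⟩ :=
    D.eq_one_of_mat_mul_mul_eq_one hv hw' (D.torus_le_diagonalSubgroup ht) hmat'
  rw [hv_one, hw_one, one_mul, one_mul] at hmat'
  have ht' := D.mem_rankOne_of_mem_torus hι hf hol ht hmat'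
  have hcomm := Subgroup.mem_center_iff.mp (D.mem_center_of_mat_eq_one hι hol ht' hmat') u
  rwa [hconj, hv_one, hw_one, one_mul, one_mul, hcomm, mul_inv_cancel_right]

lemma rootClosure_adjacent_eq_top [WellFoundedLT α] [IsStronglyCoatomic α] (f : ι ≃ α) :
    (D.rootClosure fun p q => f p ⋖ f q ∨ f q ⋖ f p) = ⊤ := by
  set K := D.rootClosure fun p q => f p ⋖ f q ∨ f q ⋖ f p
  have hmem (q : ι) : ∀ p, f p < f q → ∀ r, D.x p q r ∈ K ∧ D.x q p r ∈ K := by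
    induction q using (InvImage.wf f wellFounded_lt).induction with
    | _ q ih =>
    intro p hpq r
    have hne : p ≠ q := ne_of_apply_ne f hpq.ne
    obtain ⟨c, hpc, hcq⟩ := exists_le_covBy_of_lt hpq
    obtain ⟨k, rfl⟩ := f.surjective c
    rcases hpc.eq_or_lt with hpk | hpk
    · rw [← hpk] at hcq
      exact ⟨D.x_mem_rootClosure hne (Or.inl hcq) r, D.x_mem_rootClosure hne.symm (Or.inr hcq) r⟩
    have hne_pk : p ≠ k := ne_of_apply_ne f hpk.ne
    have hne_kq : k ≠ q := ne_of_apply_ne f hcq.ne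
    have hpk_mem := ih k hcq.lt p hpk
    exact ⟨D.x_mem_of_forall_mem hne hne_pk hne_kq.symm (fun r => (hpk_mem r).1)
        (D.x_mem_rootClosure hne_kq (Or.inl hcq)) r,
      D.x_mem_of_forall_mem hne.symm hne_kq.symm hne_pk
        (D.x_mem_rootClosure hne_kq.symm (Or.inr hcq)) (fun r => (hpk_mem r).2) r⟩
  rw [← top_le_iff, ← D.closure_x, Subgroup.closure_le]
  rintro _ ⟨i, j, r, hij, rfl⟩
  rcases (f.injective.ne hij).lt_or_gt with h | h
  · exact (hmem j i h r).1
  · exact (hmem i j h r).2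

theorem ker_mat_le_rankOne (hι : 3 ≤ ENat.card ι) (hS : HasStableRangeOne S) (hol : o ≠ l) :
    D.mat.ker ≤ D.rankOne o l := by
  let f := Fintype.equivFin ι
  intro g hg
  suffices hcell : g ∈ D.bigCell f from D.mem_rankOne_of_mem_bigCell hι f.injective hol hcell hg
  clear hg
  have hgen : g ∈ D.rootClosure fun p q => f p ⋖ f q ∨ f q ⋖ f p :=
    D.rootClosure_adjacent_eq_top f ▸ Subgroup.mem_top g
  induction hgen using rootClosure_induction_left with
  | one => exact D.one_mem_bigCell
  | x_mul i j r g _ hij hadj ih =>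
    rcases hadj with hadj | hadj
    · exact D.mul_mem_bigCell hS f.injective hadj (D.x_mem_rankOne hij r) ih
    · exact D.mul_mem_bigCell hS f.injective hadj (D.x_mem_rankOne' hij.symm r) ih

end BigCell

end SteinbergData

section RelativeElementary

variable {R : Type*} [CommRing R] {d : ℕ} (H : Ideal R) {i j k l : Fin d}

lemma Esub_ext {g h : Esub R d}
    (hgh : ((g : SpecialLinearGroup (Fin d) R) : Matrix (Fin d) (Fin d) R) =
      (h : SpecialLinearGroup (Fin d) R)) : g = h :=
  Subtype.ext (Subtype.ext hgh)

lemma Esub_coe_mul (g h : Esub R d) :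
    (((g * h : Esub R d) : SpecialLinearGroup (Fin d) R) : Matrix (Fin d) (Fin d) R) =
      (g : SpecialLinearGroup (Fin d) R) * (h : SpecialLinearGroup (Fin d) R) :=
  rfl

/-- The elementary matrix `I + cE_{i,j}` as an element of `E_d(R)`, with junk value `1` if
`i = j`. -/
def elementary (i j : Fin d) (c : R) : Esub R d :=
  if h : i = j then 1
  else ⟨SpecialLinearGroup.transvection h c, Subgroup.subset_closure ⟨i, j, c, h, rfl⟩⟩

lemma coe_elementary (hij : i ≠ j) (c : R) :
    ((elementary i j c : SpecialLinearGroup (Fin d) R) : Matrix (Fin d) (Fin d) R) =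
      transvection i j c := by
  rw [elementary, dif_neg hij]
  rfl

lemma elementary_add (hij : i ≠ j) (c e : R) :
    elementary i j c * elementary i j e = elementary i j (c + e) := by
  apply Esub_ext
  rw [Esub_coe_mul, coe_elementary hij, coe_elementary hij, coe_elementary hij,
    transvection_mul_transvection_same _ _ hij]

lemma elementary_inv_mul (hij : i ≠ j) (c e : R) :
    (elementary i j c)⁻¹ * elementary i j e = elementary i j (e - c) := by
  rw [inv_mul_eq_iff_eq_mul, elementary_add hij, add_sub_cancel]

lemma elementary_commute (hij : i ≠ j) (hkl : k ≠ l) (hjk : j ≠ k) (hil : i ≠ l) (c e : R) :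
    Commute (elementary i j c) (elementary k l e) := by
  apply Esub_ext
  simp only [Esub_coe_mul, coe_elementary hij, coe_elementary hkl,
    transvection, mul_add, add_mul, one_mul, mul_one, single_mul_single_of_ne _ _ _ _ hjk,
    single_mul_single_of_ne _ _ _ _ hil.symm]
  abel

lemma elementary_mul_elementary (hij : i ≠ j) (hjk : j ≠ k) (hik : i ≠ k) (c e : R) :
    elementary i j c * elementary j k e =
      elementary i k (c * e) * elementary j k e * elementary i j c := by
  apply Esub_ext
  simp only [Esub_coe_mul, coe_elementary hij, coe_elementary hjk,
    coe_elementary hik, transvection, mul_add, add_mul, one_mul, mul_one,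
    single_mul_single_same, single_mul_single_of_ne _ _ _ _ hik.symm,
    single_mul_single_of_ne _ _ _ _ hjk.symm, zero_mul]
  abel

lemma closure_elementary :
    Subgroup.closure {g : Esub R d | ∃ i j c, i ≠ j ∧ elementary i j c = g} = ⊤ := by
  refine (congrArg Subgroup.closure ?_).trans (Subgroup.closure_closure_coe_preimage
    (k := {M : SpecialLinearGroup (Fin d) R |
      ∃ i j c, i ≠ j ∧ (M : Matrix (Fin d) (Fin d) R) = transvection i j c}))
  ext g
  constructor
  · rintro ⟨i, j, c, hij, rfl⟩
    exact ⟨i, j, c, hij, coe_elementary hij c⟩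
  · rintro ⟨i, j, c, hij, hg⟩
    exact ⟨i, j, c, hij, Esub_ext ((coe_elementary hij c).trans hg.symm)⟩

variable {H}

lemma elementary_mem_EHsub (hij : i ≠ j) {c : R} (hc : c ∈ H) :
    (elementary i j c : SpecialLinearGroup (Fin d) R) ∈ EHsub R d H :=
  Subgroup.subset_closure
    ⟨1, one_mem _, _, ⟨i, j, c, hij, hc, coe_elementary hij c⟩, by rw [one_mul, inv_one, mul_one]⟩

lemma mem_SLrel_iff {a : SpecialLinearGroup (Fin d) R} :
    a ∈ SLrel R d H ↔ ∀ p q, a p q - (1 : Matrix (Fin d) (Fin d) R) p q ∈ H := by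
  rw [SLrel, MonoidHom.mem_ker, ← map_one (SpecialLinearGroup.map (Ideal.Quotient.mk H))]
  exact (Matrix.SpecialLinearGroup.ext_iff _ _).trans
    (forall₂_congr fun p q => Ideal.Quotient.mk_eq_mk_iff_sub_mem _ _)

variable (R d H)

lemma EHsub_le_Esub : EHsub R d H ≤ Esub R d := by
  refine (Subgroup.closure_le _).mpr ?_
  rintro _ ⟨g, hg, s, ⟨i, j, c, hij, -, hs⟩, rfl⟩
  exact mul_mem (mul_mem hg (Subgroup.subset_closure ⟨i, j, c, hij, hs⟩)) (inv_mem hg)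

lemma EHsub_le_SLrel : EHsub R d H ≤ SLrel R d H := by
  refine (Subgroup.closure_le _).mpr ?_
  rintro _ ⟨g, -, s, ⟨i, j, c, -, hc, hs⟩, rfl⟩
  refine (MonoidHom.normal_ker _).conj_mem s (mem_SLrel_iff.mpr fun p q => ?_) g
  rw [hs, transvection, Matrix.add_apply, add_sub_cancel_left, Matrix.single_apply]
  split_ifs
  exacts [hc, H.zero_mem]

lemma Esub_le_normalizer_EHsub : Esub R d ≤ Subgroup.normalizer (EHsub R d H) := by
  refine Subgroup.le_normalizer_closure_iff.mpr ?_
  rintro g hg _ ⟨h, hh, s, hs, rfl⟩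
  exact Subgroup.subset_closure ⟨g * h, mul_mem hg hh, s, hs, by group⟩

instance normal_EHsub_subgroupOf_Esub : ((EHsub R d H).subgroupOf (Esub R d)).Normal :=
  (Subgroup.normal_subgroupOf_iff_le_normalizer (EHsub_le_Esub R d H)).mpr
    (Esub_le_normalizer_EHsub R d H)

/-- The quotient group `E_d(R) / E_d(R, H)`. -/
abbrev ElementaryQuotient : Type _ := Esub R d ⧸ (EHsub R d H).subgroupOf (Esub R d)

/-- The root element of `E_d(R) / E_d(R, H)` with parameter in `R / H`, obtained from a
representative of the parameter in `R`. -/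
noncomputable def elementaryMod (i j : Fin d) (s : R ⧸ H) : ElementaryQuotient R d H :=
  QuotientGroup.mk (elementary i j s.out)

/-- The matrix over `R / H` of an element of `E_d(R) / E_d(R, H)`. -/
def reduction : ElementaryQuotient R d H →* Matrix (Fin d) (Fin d) (R ⧸ H) :=
  QuotientGroup.lift _
    (((Units.coeHom _).comp SpecialLinearGroup.toGL).comp
      ((SpecialLinearGroup.map (Ideal.Quotient.mk H)).comp (Esub R d).subtype))
    fun g hg => by
      have hred : SpecialLinearGroup.map (Ideal.Quotient.mk H) (g : SpecialLinearGroup (Fin d) R) =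
        1 := EHsub_le_SLrel R d H hg
      simp [hred]

variable {R d H}

lemma reduction_mk (g : Esub R d) :
    reduction R d H (QuotientGroup.mk g) =
      SpecialLinearGroup.map (Ideal.Quotient.mk H) (g : SpecialLinearGroup (Fin d) R) :=
  rfl

lemma reduction_mk_eq_one {g : Esub R d} (hg : (g : SpecialLinearGroup (Fin d) R) ∈ SLrel R d H) :
    reduction R d H (QuotientGroup.mk g) = 1 :=
  congrArg (fun M : SpecialLinearGroup (Fin d) (R ⧸ H) => M.val) (MonoidHom.mem_ker.mp hg)

lemma elementaryMod_mk (hij : i ≠ j) (c : R) :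
    elementaryMod R d H i j (Ideal.Quotient.mk H c) = QuotientGroup.mk (elementary i j c) := by
  refine QuotientGroup.eq.mpr ?_
  rw [elementary_inv_mul hij]
  exact elementary_mem_EHsub hij (Ideal.Quotient.eq.mp (Quotient.out_eq _).symm)

lemma reduction_elementaryMod (hij : i ≠ j) (s : R ⧸ H) :
    reduction R d H (elementaryMod R d H i j s) = transvection i j s := by
  obtain ⟨c, rfl⟩ := Ideal.Quotient.mk_surjective s
  rw [elementaryMod_mk hij, reduction_mk, SpecialLinearGroup.map_apply_coe, coe_elementary hij]
  ext p q
  simp [transvection, Matrix.single_apply, Matrix.one_apply, apply_ite (Ideal.Quotient.mk H)]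

variable (R d H)

/-- `E_d(R) / E_d(R, H)` is generated by root elements with parameters in `R / H` which satisfy the
Steinberg relations over `R / H`. -/
noncomputable def steinbergData :
    SteinbergData (Fin d) (R ⧸ H) (ElementaryQuotient R d H) where
  x := elementaryMod R d H
  mat := reduction R d H
  x_add {i j} hij := Ideal.Quotient.mk_surjective.forall₂.mpr fun r s => by
    rw [← map_add, elementaryMod_mk hij, elementaryMod_mk hij, elementaryMod_mk hij,
      ← QuotientGroup.mk_mul, elementary_add hij]
  x_commute {i j k l} hij hkl hjk hil := Ideal.Quotient.mk_surjective.forall₂.mpr fun r s => by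
    rw [elementaryMod_mk hij, elementaryMod_mk hkl]
    exact (elementary_commute hij hkl hjk hil r s).map (QuotientGroup.mk' _)
  x_mul_x {i j k} hij hjk hik := Ideal.Quotient.mk_surjective.forall₂.mpr fun r s => by
    rw [← map_mul, elementaryMod_mk hij, elementaryMod_mk hjk, elementaryMod_mk hik,
      ← QuotientGroup.mk_mul, elementary_mul_elementary hij hjk hik, QuotientGroup.mk_mul,
      QuotientGroup.mk_mul]
  mat_x := reduction_elementaryMod
  closure_x := by
    rw [← top_le_iff, ← Subgroup.map_top_of_surjective _ (QuotientGroup.mk'_surjective _),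
      ← closure_elementary, Subgroup.map_le_iff_le_comap, Subgroup.closure_le]
    rintro _ ⟨i, j, c, hij, rfl⟩
    exact Subgroup.subset_closure ⟨i, j, Ideal.Quotient.mk H c, hij, elementaryMod_mk hij c⟩

end RelativeElementary

section TwoBlock

variable {R : Type*} [CommRing R] {d : ℕ}

/-- The block matrix `diag(A, I_{d-2})`; for `d < 2` it is a corner of `A`. -/
def twoBlock (d : ℕ) (A : Matrix (Fin 2) (Fin 2) R) : Matrix (Fin d) (Fin d) R := fun p q =>
  if hp : p.val < 2 then
    (if hq : q.val < 2 then A ⟨p.val, hp⟩ ⟨q.val, hq⟩ else 0)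
  else (1 : Matrix (Fin d) (Fin d) R) p q

lemma twoBlock_castLE (hd : 2 ≤ d) (A : Matrix (Fin 2) (Fin 2) R) (p q : Fin 2) :
    twoBlock d A (p.castLE hd) (q.castLE hd) = A p q := by
  simp only [twoBlock, Fin.val_castLE, Fin.is_lt, dite_true, Fin.eta]

lemma twoBlock_one : twoBlock d (1 : Matrix (Fin 2) (Fin 2) R) = 1 := by
  ext p q
  simp only [twoBlock, Matrix.one_apply, Fin.ext_iff]
  split_ifs <;> first | rfl | omega

lemma transvection_mul_twoBlock {i j : Fin d} (hi : i.val < 2) (hj : j.val < 2) (c : R)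
    (A : Matrix (Fin 2) (Fin 2) R) :
    transvection i j c * twoBlock d A = twoBlock d (transvection ⟨i, hi⟩ ⟨j, hj⟩ c * A) := by
  ext p q
  rcases eq_or_ne p i with rfl | hpi
  · rw [transvection_mul_apply_same]
    simp only [twoBlock, hi, hj, dite_true]
    split_ifs
    · rw [transvection_mul_apply_same]
    · rw [mul_zero, add_zero]
  · rw [transvection_mul_apply_of_ne _ _ _ _ hpi]
    simp only [twoBlock]
    split_ifs
    · rw [transvection_mul_apply_of_ne]
      exact fun h => hpi (Fin.ext (Fin.mk.inj h))
    · rfl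
    · rfl

variable {H : Ideal R}

lemma exists_twoBlock_of_mem_rankOne {i j : Fin d} (hi : i.val < 2) (hj : j.val < 2)
    {g : ElementaryQuotient R d H} (hg : g ∈ (steinbergData R d H).rankOne i j) :
    ∃ b : Esub R d, QuotientGroup.mk b = g ∧ ∃ A : Matrix (Fin 2) (Fin 2) R, A.det = 1 ∧
      ((b : SpecialLinearGroup (Fin d) R) : Matrix (Fin d) (Fin d) R) = twoBlock d A := by
  induction hg using SteinbergData.rootClosure_induction_left with
  | one => exact ⟨1, rfl, 1, det_one, twoBlock_one.symm⟩
  | x_mul p q r g _ hpq hP ih =>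
    obtain ⟨b, rfl, A, hA, hb⟩ := ih
    obtain ⟨c, rfl⟩ := Ideal.Quotient.mk_surjective r
    obtain ⟨hp, hq⟩ : p.val < 2 ∧ q.val < 2 := by
      rcases hP with ⟨rfl, rfl⟩ | ⟨rfl, rfl⟩ <;> constructor <;> assumption
    have hpq' : (⟨p, hp⟩ : Fin 2) ≠ ⟨q, hq⟩ := fun h => hpq (Fin.ext (Fin.mk.inj h))
    refine ⟨elementary p q c * b, ?_, transvection ⟨p, hp⟩ ⟨q, hq⟩ c * A, ?_, ?_⟩
    · rw [QuotientGroup.mk_mul, ← elementaryMod_mk hpq]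
      rfl
    · rw [det_mul, det_transvection_of_ne _ _ hpq', hA, one_mul]
    · rw [Esub_coe_mul, coe_elementary hpq, hb,
        transvection_mul_twoBlock hp hq]

end TwoBlock

theorem SK1_rep_two_by_two_general (R : Type*) [CommRing R] (H : Ideal R)
    (hS : HasStableRangeOne (R ⧸ H)) (d : ℕ) (hd : 3 ≤ d) :
    ∀ a : SpecialLinearGroup (Fin d) R, a ∈ Esub R d → a ∈ SLrel R d H →
      ∃ b : SpecialLinearGroup (Fin d) R, b ∈ SLrel R d H ∧
        a * b⁻¹ ∈ EHsub R d H ∧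
        ∃ A : Matrix (Fin 2) (Fin 2) R, A.det = 1 ∧
          (∀ p q : Fin 2, A p q - (1 : Matrix (Fin 2) (Fin 2) R) p q ∈ H) ∧
          ∀ p q : Fin d,
            (b : Matrix (Fin d) (Fin d) R) p q =
              if hp : p.val < 2 then
                (if hq : q.val < 2 then A ⟨p.val, hp⟩ ⟨q.val, hq⟩ else 0)
              else (1 : Matrix (Fin d) (Fin d) R) p q := by
  intro a ha hrel
  have hd2 : 2 ≤ d := by omega
  have hrank := (steinbergData R d H).ker_mat_le_rankOne (by simpa using hd) hS
    (o := Fin.castLE hd2 0) (l := Fin.castLE hd2 1) (by simp)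
    (reduction_mk_eq_one (g := ⟨a, ha⟩) hrel)
  obtain ⟨b, hab, A, hA, hb⟩ := exists_twoBlock_of_mem_rankOne (by simp) (by simp) hrank
  have hab' : a * (b : SpecialLinearGroup (Fin d) R)⁻¹ ∈ EHsub R d H :=
    (normal_EHsub_subgroupOf_Esub R d H).mem_comm (QuotientGroup.eq.mp hab)
  have hb_rel : (b : SpecialLinearGroup (Fin d) R) ∈ SLrel R d H :=
    ((SLrel R d H).mul_mem_cancel_left (EHsub_le_SLrel R d H hab')).mp
      (by rwa [inv_mul_cancel_right])
  refine ⟨b, hb_rel, hab', A, hA, fun p q => ?_, congrFun₂ hb⟩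
  have h := mem_SLrel_iff.mp hb_rel (p.castLE hd2) (q.castLE hd2)
  rwa [hb, ← twoBlock_one, twoBlock_castLE, twoBlock_castLE] at h

/-- If `H` has finite index in `R`, `d ≥ 3`, and `E_d(R) = SL_d(R)`, then every element of
`SK₁(R,H;d)` has a representative in `SL_d(R,H)` of block form `diag(A, I_{d-2})` with
`A ∈ SL₂(R,H)`. -/
theorem SK1_rep_two_by_two (R : Type*) [CommRing R] (H : Ideal R) [Finite (R ⧸ H)]
    (d : ℕ) (hd : 3 ≤ d) (hE : Esub R d = ⊤) :
    ∀ a : SpecialLinearGroup (Fin d) R, a ∈ SLrel R d H →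
      ∃ b : SpecialLinearGroup (Fin d) R, b ∈ SLrel R d H ∧
        a * b⁻¹ ∈ EHsub R d H ∧
        ∃ A : Matrix (Fin 2) (Fin 2) R, A.det = 1 ∧
          (∀ p q : Fin 2, A p q - (1 : Matrix (Fin 2) (Fin 2) R) p q ∈ H) ∧
          ∀ p q : Fin d,
            (b : Matrix (Fin d) (Fin d) R) p q =
              if hp : p.val < 2 then
                (if hq : q.val < 2 then A ⟨p.val, hp⟩ ⟨q.val, hq⟩ else 0)
              else (1 : Matrix (Fin d) (Fin d) R) p q := by
  have hS := hasStableRangeOne_of_isArtinianRing (R ⧸ H)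
  exact fun a => SK1_rep_two_by_two_general R H hS d hd a (hE ▸ Subgroup.mem_top a)
end
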